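/- arXiv:1904.10382 — 2 statements merged into one kernel-verified Lean document; each statement's English description precedes it below -/
import Mathlib

section
/- Fix a prime p. Let (R,m,k) ⊆ (S,n,l) be a finite extension of F-finite noetherian local domains of characteristic p with n ∩ R = m, residue fields k = R/m and l = S/n, and fraction fields K ⊆ L. Let T : S → R be an R-linear map such that σ is injective and a generic isomorphism, T is surjective, and T(n) ⊆ m. Let C be a Cartier subalgebra of C_R such that every φ ∈ C_e has a chosen T-transpose φ^⊤, and assume a_e(R,C) ≠ 0 for some e ≥ 1; set n₀ := gcd{ e ≥ 1 : a_e(R,C) ≠ 0 }, d := dim R (Krull dimension; note dim S = d), r_k := [k^{1/p} : k] and r_l := [l^{1/p} : l] (the dimension of the residue field as a module over itself via Frobenius). If the sequence e ↦ a_{n₀e}(R,C)/(p^{n₀e·d}·r_k^{n₀e}) converges to a real number s(R,C) and the sequence e ↦ a_{n₀e}(S,f*C)/(p^{n₀e·d}·r_l^{n₀e}) converges to a real number s(S,f*C), then [l : k]·s(S,f*C) = [L : K]·s(R,C). -/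
/-- `p^e`-semilinear additive maps ("Cartier maps"):
`φ (a^{p^e} • x) = a • φ x`. -/
def IsCartierMap (p : ℕ) (A : Type*) [CommSemiring A] {X Y : Type*} [AddCommMonoid X]
    [AddCommMonoid Y] [Module A X] [Module A Y] (e : ℕ) (φ : X →+ Y) : Prop :=
  ∀ (a : A) (x : X), φ (a ^ p ^ e • x) = a • φ x

/-- A Cartier structure (Cartier subalgebra of `C_X`) on an `A`-module `X`. -/
structure CartierStructure (p : ℕ) (A : Type*) [CommRing A] (X : Type*) [AddCommGroup X]
    [Module A X] where
  carrier : ℕ → Set (X →+ X)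
  cartier_mem : ∀ e, 1 ≤ e → ∀ φ ∈ carrier e, IsCartierMap p A e φ
  add_mem : ∀ e, 1 ≤ e → ∀ φ ∈ carrier e, ∀ ψ ∈ carrier e, φ + ψ ∈ carrier e
  smul_mem : ∀ e, 1 ≤ e → ∀ (a : A), ∀ φ ∈ carrier e,
    (DistribMulAction.toAddMonoidHom X a).comp φ ∈ carrier e
  mul_mem : ∀ e, 1 ≤ e → ∀ (a : A), ∀ φ ∈ carrier e,
    φ.comp (DistribMulAction.toAddMonoidHom X a) ∈ carrier e
  comp_mem : ∀ e d, 1 ≤ e → 1 ≤ d → ∀ φ ∈ carrier e, ∀ ψ ∈ carrier d,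
    φ.comp ψ ∈ carrier (e + d)

/-- The `S`-linear map `σ : S → Hom_R(S,R)`, `σ(s)(x) = T(s·x)`, as an `R`-bilinear map. -/
noncomputable def sigmaT (R S : Type*) [CommRing R] [CommRing S] [Algebra R S]
    (T : S →ₗ[R] R) : S →ₗ[R] (S →ₗ[R] R) :=
  LinearMap.mk₂ R (fun s x => T (s * x))
    (fun s s' x => by show T ((s + s') * x) = T (s * x) + T (s' * x); rw [add_mul, map_add])
    (fun r s x => by show T ((r • s) * x) = r • T (s * x); rw [smul_mul_assoc, map_smul])
    (fun s x x' => by show T (s * (x + x')) = T (s * x) + T (s * x'); rw [mul_add, map_add])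
    (fun r s x => by show T (s * (r • x)) = r • T (s * x); rw [mul_smul_comm, map_smul])

/-- `ψ` is a `T`-transpose of `φ`: `T (ψ s * s') = φ (T (s * s'^{p^e}))`. -/
def IsTranspose (p : ℕ) {R S : Type*} [CommRing R] [CommRing S] [Algebra R S]
    (T : S →ₗ[R] R) (e : ℕ) (φ : R →+ R) (ψ : S →+ S) : Prop :=
  ∀ s s' : S, T (ψ s * s') = φ (T (s * s' ^ p ^ e))

/-- The degree-`e` part of the pulled back Cartier algebra `f^*C`:
finite sums `Σ φᵢ^⊤ · sᵢ` where `(χ · s) x = χ (s * x)`. -/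
def pushFam {R S : Type*} [CommRing R] [CommRing S] (D : ℕ → Set (R →+ R))
    (tr : ℕ → (R →+ R) → (S →+ S)) : ℕ → Set (S →+ S) := fun e =>
  { ψ | ∃ (k : ℕ) (φ : Fin k → R →+ R) (s : Fin k → S), (∀ i, φ i ∈ D e) ∧
      ψ = ∑ i, (tr e (φ i)).comp (AddMonoidHom.mulLeft (s i)) }

/-- The length of a module, as the Krull dimension of its submodule lattice. -/
noncomputable def moduleLength (A : Type*) [Ring A] (M : Type*) [AddCommGroup M]
    [Module A M] : WithBot ℕ∞ :=
  Order.krullDim (Submodule A M)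

/-- The splitting number `a_e`: the length (as a left `A`-module) of `D/D^{ns}` where
`D^{ns} = {ϑ ∈ D | ϑ(X) ⊆ m}`, realized as the image of the span of `D` in the quotient by
the span of `D^{ns}`. -/
noncomputable def splitNum (A : Type*) [CommRing A] [IsLocalRing A]
    {X : Type*} [AddCommMonoid X] (D : Set (X →+ A)) : WithBot ℕ∞ :=
  moduleLength A
    ↥(Submodule.map
        (Submodule.span A { ϑ ∈ D | ∀ x, ϑ x ∈ IsLocalRing.maximalIdeal A }).mkQ
        (Submodule.span A D))

/-- Type synonym for a ring viewed as a module over itself via Frobenius. -/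
def FrobMod (A : Type*) := A

instance {A : Type*} [AddCommGroup A] : AddCommGroup (FrobMod A) := ‹AddCommGroup A›

/-- The module structure of `A` on `FrobMod A = A` via the Frobenius `a ↦ a^p`;
`A` is `F`-finite iff `FrobMod A` is a finite module, and `[A^{1/p} : A]` is its rank. -/
noncomputable def frobModule (p : ℕ) (hp : p.Prime) (A : Type*) [CommRing A] [CharP A p] :
    Module A (FrobMod A) :=
  haveI : ExpChar A p := .prime hp
  Module.compHom A (frobenius A p)

/-!
For each `e` let `I_e = {x | φ (R x) ⊆ m for all φ ∈ C_e}`. Evaluation modulo `m` is a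
non-degenerate pairing between `C_e / C_e^ns` and `F^e_* (R ⧸ I_e)` over the residue field, so that
row rank = column rank gives `a_e(R, C) = ℓ(R ⧸ I_e) [k^{1/p} : k]^e`, and likewise on `S`. Since
`T` is onto and maps `n` into `m`, the ideal attached to `f^*C` is `J_e = {s | T (s S) ⊆ I_e}`.

The form `T (s s')` is injective, hence embeds `S` into `R^n`, `n = [L : K]`, with a quasi-inverse:
up to some `c ≠ 0` the embedding is invertible, and both maps respect `J_e` and `I_e^n`. Therefore
`ℓ_R(S ⧸ J_e)` and `n ℓ_R(R ⧸ I_e)` differ by a bounded multiple of `ℓ_R(R ⧸ (I_e + (c)))`. As `I_e`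
contains the `p^e`-th powers of the elements of `m` and `R ⧸ c` has dimension at most `d - 1`, the
last length is `O(p^{e(d - 1)})`, which disappears after division by `p^{ed}`.
-/

section Length

open scoped Pointwise

variable {A M N P : Type*} [CommRing A] [AddCommGroup M] [Module A M] [AddCommGroup N]
  [Module A N] [AddCommGroup P] [Module A P]

lemma length_le_add_of_ker_le_range (f : M →ₗ[A] N) (g : N →ₗ[A] P)
    (h : LinearMap.ker g ≤ LinearMap.range f) :
    Module.length A N ≤ Module.length A M + Module.length A P := by
  have hg := Module.length_eq_add_of_exact (LinearMap.ker g).subtype g.rangeRestrict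
    (Submodule.subtype_injective _) g.surjective_rangeRestrict
    (LinearMap.exact_iff.mpr (by simp))
  rw [hg]
  gcongr
  · exact (Module.length_le_of_injective _ (Submodule.inclusion_injective h)).trans
      (Module.length_le_of_surjective _ f.surjective_rangeRestrict)
  · exact Module.length_le_of_injective _ (Submodule.subtype_injective _)

lemma length_range_eq_of_ker_eq {f : M →ₗ[A] N} {g : M →ₗ[A] P}
    (h : LinearMap.ker f = LinearMap.ker g) :
    Module.length A (LinearMap.range f) = Module.length A (LinearMap.range g) :=
  (f.quotKerEquivRange.symm.trans
    ((Submodule.quotEquivOfEq _ _ h).trans g.quotKerEquivRange)).length_eq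

lemma length_le_add_length_quotSMulTop (c : A) (f : M →ₗ[A] N) (g : N →ₗ[A] M)
    (h : ∀ x, g (f x) = c • x) :
    Module.length A M ≤ Module.length A N + Module.length A (QuotSMulTop c M) := by
  refine length_le_add_of_ker_le_range g (c • (⊤ : Submodule A M)).mkQ ?_
  rw [Submodule.ker_mkQ]
  rintro _ ⟨x, -, rfl⟩
  exact ⟨f x, h x⟩

lemma length_le_card_mul_of_surjective {ι : Type*} [Fintype ι] {I : Ideal A}
    (f : (ι → A) →ₗ[A] M) (hf : Function.Surjective f) (hI : I ≤ Module.annihilator A M) :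
    Module.length A M ≤ Fintype.card ι * Module.length A (A ⧸ I) := by
  classical
  let π : (ι → A) →ₗ[A] (ι → A ⧸ I) := I.mkQ.compLeft ι
  have hπ : Function.Surjective π := I.mkQ_surjective.comp_left
  have hker : LinearMap.ker π ≤ LinearMap.ker f := by
    intro x hx
    have hxI (i : ι) : x i ∈ I := (Submodule.Quotient.mk_eq_zero I).mp (congrFun hx i)
    rw [LinearMap.mem_ker, LinearMap.pi_apply_eq_sum_univ]
    exact Finset.sum_eq_zero fun i _ => Module.mem_annihilator.mp (hI (hxI i)) _
  calc Module.length A M ≤ Module.length A ((ι → A) ⧸ LinearMap.ker π) :=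
        Module.length_le_of_surjective ((LinearMap.ker π).liftQ f hker) fun y =>
          let ⟨x, hx⟩ := hf y; ⟨Submodule.Quotient.mk x, hx⟩
    _ = Fintype.card ι * Module.length A (A ⧸ I) := by
        rw [(π.quotKerEquivOfSurjective hπ).length_eq, Module.length_pi,
          ENat.card_eq_coe_fintype_card]

lemma length_quotSMulTop_le_card_mul {ι : Type*} [Fintype ι] {I : Ideal A} (c : A)
    (f : (ι → A) →ₗ[A] M) (hf : Function.Surjective f) (hI : I ≤ Module.annihilator A M) :
    Module.length A (QuotSMulTop c M) ≤
      Fintype.card ι * Module.length A (A ⧸ (I ⊔ Ideal.span {c})) := by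
  have hI' : I ⊔ Ideal.span {c} ≤ Module.annihilator A (QuotSMulTop c M) := by
    refine sup_le (hI.trans ?_) ((Ideal.span_singleton_le_iff_mem _).mpr ?_)
    · exact LinearMap.annihilator_le_of_surjective _ (Submodule.mkQ_surjective _)
    · refine Module.mem_annihilator.mpr fun x => ?_
      obtain ⟨x, rfl⟩ := Submodule.Quotient.mk_surjective _ x
      exact (Submodule.Quotient.mk_eq_zero _).mpr (Submodule.smul_mem_pointwise_smul x c ⊤ trivial)
  exact length_le_card_mul_of_surjective ((c • (⊤ : Submodule A M)).mkQ ∘ₗ f)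
    ((Submodule.mkQ_surjective _).comp hf) hI'

lemma length_quotient_le_of_le {I J : Ideal A} (h : I ≤ J) :
    Module.length A (A ⧸ J) ≤ Module.length A (A ⧸ I) :=
  Module.length_le_of_surjective (Submodule.factor h) (Submodule.factor_surjective h)

lemma length_quotient_sup_eq_length_quotient_map (I J : Ideal A) :
    Module.length A (A ⧸ (I ⊔ J)) =
      Module.length (A ⧸ J) ((A ⧸ J) ⧸ I.map (Ideal.Quotient.mk J)) := by
  rw [← Module.length_eq_of_surjective (S := A) (R := A ⧸ J) Ideal.Quotient.mk_surjective, sup_comm]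
  exact (DoubleQuot.quotQuotEquivQuotSupₐ A J I).symm.toLinearEquiv.length_eq

lemma length_quotient_sup_span_mul_le (I : Ideal A) (x y : A) :
    Module.length A (A ⧸ (I ⊔ Ideal.span {x * y})) ≤
      Module.length A (A ⧸ (I ⊔ Ideal.span {y})) + Module.length A (A ⧸ (I ⊔ Ideal.span {x})) := by
  have hx : I ⊔ Ideal.span {x * y} ≤ I ⊔ Ideal.span {x} :=
    sup_le_sup_left (Ideal.span_singleton_le_span_singleton.mpr (dvd_mul_right x y)) _
  have hy : I ⊔ Ideal.span {y} ≤
      Submodule.comap (LinearMap.mulLeft A x) (I ⊔ Ideal.span {x * y}) := by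
    refine sup_le (fun a ha => Ideal.mem_sup_left (I.mul_mem_left x ha)) ?_
    exact (Ideal.span_singleton_le_iff_mem _).mpr
      (Ideal.mem_sup_right (Ideal.mem_span_singleton_self _))
  refine length_le_add_of_ker_le_range (Submodule.mapQ _ _ (LinearMap.mulLeft A x) hy)
    (Submodule.factor hx) fun z hz => ?_
  obtain ⟨z, rfl⟩ := Submodule.Quotient.mk_surjective _ z
  obtain ⟨a, ha, b, hb, rfl⟩ := Submodule.mem_sup.mp ((Submodule.Quotient.mk_eq_zero _).mp hz)
  obtain ⟨b, rfl⟩ := Ideal.mem_span_singleton.mp hb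
  refine ⟨Submodule.Quotient.mk b, (Submodule.Quotient.eq _).mpr ?_⟩
  simpa using Ideal.mem_sup_left ha

lemma length_quotient_sup_span_pow_le (I : Ideal A) (x : A) (q : ℕ) :
    Module.length A (A ⧸ (I ⊔ Ideal.span {x ^ q})) ≤
      q * Module.length A (A ⧸ (I ⊔ Ideal.span {x})) := by
  induction q with
  | zero =>
    have : Subsingleton (A ⧸ (I ⊔ Ideal.span {x ^ 0})) := by
      rw [Submodule.Quotient.subsingleton_iff]; simp
    simp [Module.length_eq_zero]
  | succ q ih =>
    rw [pow_succ', Nat.cast_succ, add_one_mul]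
    exact (length_quotient_sup_span_mul_le I x (x ^ q)).trans (by gcongr)

lemma length_quotient_sup_span_image_pow_le (q : ℕ) (s : Finset A) (I : Ideal A) :
    Module.length A (A ⧸ (I ⊔ Ideal.span ((· ^ q) '' (s : Set A)))) ≤
      q ^ s.card * Module.length A (A ⧸ (I ⊔ Ideal.span (s : Set A))) := by
  classical
  induction s using Finset.induction_on generalizing I with
  | empty => rw [Finset.coe_empty, Set.image_empty]; simp
  | insert a s ha ih =>
    have hswap : I ⊔ Ideal.span {a ^ q} ⊔ Ideal.span (s : Set A) =
        I ⊔ Ideal.span (s : Set A) ⊔ Ideal.span {a ^ q} := sup_right_comm _ _ _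
    rw [Finset.card_insert_of_notMem ha, Finset.coe_insert, Set.image_insert_eq, Ideal.span_insert,
      Ideal.span_insert, ← sup_assoc, sup_comm (Ideal.span {a}), ← sup_assoc, pow_succ, mul_assoc]
    refine (ih _).trans ?_
    rw [hswap]
    gcongr
    exact length_quotient_sup_span_pow_le _ a q

end Length

section Pairing

variable {A κ M P Q : Type*} [CommRing A] [Field κ] [Algebra A κ] [AddCommGroup M] [Module A M]
  [AddCommGroup P] [Module A P] [AddCommGroup Q] [Module A Q]

lemma length_dual_le (V : Type*) [AddCommGroup V] [Module κ V] :
    Module.length κ (Module.Dual κ V) ≤ Module.length κ V := by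
  by_cases h : Module.Finite κ V
  · rw [Module.length_eq_finrank, Module.length_eq_finrank, Subspace.dual_finrank_eq]
  · have hV : Module.length κ V = ⊤ := by
      rwa [Module.length_eq_rank, Cardinal.toENat_eq_top, ← not_lt, Module.rank_lt_aleph0_iff]
    exact hV ▸ le_top

lemma length_linearMap_field_le (hκ : Function.Surjective (algebraMap A κ)) :
    Module.length A (M →ₗ[A] κ) ≤ Module.length A M := by
  have hmk : Function.Surjective (TensorProduct.mk A κ M 1) := by
    intro z
    induction z with
    | zero => exact ⟨0, map_zero _⟩
    | tmul k m =>
      obtain ⟨a, rfl⟩ := hκ k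
      exact ⟨a • m, by rw [Algebra.algebraMap_eq_smul_one, TensorProduct.smul_tmul]; rfl⟩
    | add x y hx hy =>
      obtain ⟨⟨a, rfl⟩, b, rfl⟩ := And.intro hx hy
      exact ⟨a + b, map_add _ a b⟩
  calc Module.length A (M →ₗ[A] κ) = Module.length κ (M →ₗ[A] κ) :=
        (Module.length_eq_of_surjective hκ)
    _ = Module.length κ (Module.Dual κ (TensorProduct A κ M)) :=
        (LinearMap.liftBaseChangeEquiv κ).length_eq
    _ ≤ Module.length κ (TensorProduct A κ M) := length_dual_le _
    _ = Module.length A (TensorProduct A κ M) := (Module.length_eq_of_surjective hκ).symm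
    _ ≤ Module.length A M := Module.length_le_of_surjective _ hmk

lemma length_range_le_length_range_flip (hκ : Function.Surjective (algebraMap A κ))
    (B : P →ₗ[A] Q →ₗ[A] κ) :
    Module.length A (LinearMap.range B) ≤ Module.length A (LinearMap.range B.flip) := by
  let E : P →ₗ[A] (LinearMap.range B.flip →ₗ[A] κ) := (LinearMap.range B.flip).subtype.flip
  have hE : LinearMap.ker E = LinearMap.ker B := by
    ext x
    refine ⟨fun h => LinearMap.ext fun y => ?_, fun h => LinearMap.ext fun ⟨_, y, hy⟩ => ?_⟩
    · exact LinearMap.congr_fun h ⟨B.flip y, y, rfl⟩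
    · subst hy
      exact LinearMap.congr_fun h y
  calc Module.length A (LinearMap.range B) = Module.length A (LinearMap.range E) :=
        length_range_eq_of_ker_eq hE.symm
    _ ≤ Module.length A (LinearMap.range B.flip →ₗ[A] κ) :=
        Module.length_le_of_injective _ (Submodule.subtype_injective _)
    _ ≤ Module.length A (LinearMap.range B.flip) := length_linearMap_field_le hκ

lemma length_range_eq_length_range_flip (hκ : Function.Surjective (algebraMap A κ))
    (B : P →ₗ[A] Q →ₗ[A] κ) :
    Module.length A (LinearMap.range B) = Module.length A (LinearMap.range B.flip) :=
  (length_range_le_length_range_flip hκ B).antisymm (length_range_le_length_range_flip hκ B.flip)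

lemma length_map_mkQ_eq_length_of_pairing (hκ : Function.Surjective (algebraMap A κ))
    {N N' : Submodule A M} (B : N →ₗ[A] P →ₗ[A] κ) (hB : ∀ x, B x = 0 ↔ x.1 ∈ N')
    (π : P →ₗ[A] Q) (hπ : Function.Surjective π) (hker : LinearMap.ker B.flip = LinearMap.ker π) :
    Module.length A (N.map N'.mkQ) = Module.length A Q := by
  have hBker : LinearMap.ker (N'.mkQ ∘ₗ N.subtype) = LinearMap.ker B := by
    ext x
    exact (Submodule.Quotient.mk_eq_zero N').trans (hB x).symm
  calc Module.length A (N.map N'.mkQ)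
      = Module.length A (LinearMap.range (N'.mkQ ∘ₗ N.subtype)) := by
        rw [LinearMap.range_comp, Submodule.range_subtype]
    _ = Module.length A (LinearMap.range B) := length_range_eq_of_ker_eq hBker
    _ = Module.length A (LinearMap.range B.flip) := length_range_eq_length_range_flip hκ B
    _ = Module.length A (LinearMap.range π) := length_range_eq_of_ker_eq hker
    _ = Module.length A Q := by rw [LinearMap.range_eq_top.mpr hπ, Module.length_top]

end Pairing

/-- The abelian group `M`, seen as an `A`-module by letting `a : A` act as `f a`. For `f` the
`e`-fold Frobenius this is the module written `F^e_* M`. -/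
def ScalarsAlong {A B : Type*} [CommRing A] [CommRing B] (_f : A →+* B) (M : Type*) := M

namespace ScalarsAlong

variable {A B : Type*} [CommRing A] [CommRing B] (f : A →+* B) (M : Type*) [AddCommGroup M]

instance : AddCommGroup (ScalarsAlong f M) := ‹AddCommGroup M›

instance [Module B M] : Module A (ScalarsAlong f M) := Module.compHom M f

end ScalarsAlong

/-- The degree `[κ^{1/p} : κ]` of the Frobenius of `κ`, as an extended natural number. -/
noncomputable def frobeniusDegree (κ : Type*) [CommRing κ] (p : ℕ) [ExpChar κ p] : ℕ∞ :=
  Module.length κ (ScalarsAlong (frobenius κ p) κ)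

lemma frobeniusDegree_ne_zero (κ : Type*) [CommRing κ] [Nontrivial κ] (p : ℕ) [ExpChar κ p] :
    frobeniusDegree κ p ≠ 0 :=
  have : Nontrivial (ScalarsAlong (frobenius κ p) κ) := ‹Nontrivial κ›
  Module.length_pos.ne'

section FrobeniusPushforward

open IsLocalRing

lemma length_scalarsAlong {A B : Type*} [CommRing A] [CommRing B] [IsLocalRing A] [IsLocalRing B]
    (f : A →+* B) [IsLocalHom f] (M : Type*) [AddCommGroup M] [Module B M] :
    Module.length A (ScalarsAlong f M) = Module.length B M *
      Module.length (ResidueField A) (ScalarsAlong (ResidueField.map f) (ResidueField B)) := by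
  let _ := f.toAlgebra
  let _ : Module A M := Module.compHom M f
  have : IsScalarTower A B M := ⟨fun a b x => mul_smul (f a) b x⟩
  have : IsLocalHom (algebraMap A B) := ‹IsLocalHom f›
  have hres : Module.length (ResidueField A) (ResidueField B) =
      Module.length (ResidueField A) (ScalarsAlong (ResidueField.map f) (ResidueField B)) :=
    LinearEquiv.length_eq (N := ScalarsAlong (ResidueField.map f) (ResidueField B))
      { AddEquiv.refl (ResidueField B) with
        map_smul' a x := by
          obtain ⟨a, rfl⟩ := residue_surjective a
          obtain ⟨x, rfl⟩ := residue_surjective x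
          rfl }
  exact hres ▸ length_restrictScalars A B M

lemma isLocalHom_frobenius (A : Type*) [CommRing A] (p : ℕ) [ExpChar A p] :
    IsLocalHom (frobenius A p) :=
  ⟨fun _ h => (isUnit_pow_iff (expChar_pos A p).ne').mp h⟩

variable {A : Type*} [CommRing A] [IsLocalRing A] {p : ℕ} [ExpChar A p] [ExpChar (ResidueField A) p]

lemma length_scalarsAlong_frobenius (M : Type*) [AddCommGroup M] [Module A M] :
    Module.length A (ScalarsAlong (frobenius A p) M) =
      Module.length A M * frobeniusDegree (ResidueField A) p := by
  have := isLocalHom_frobenius A p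
  have hres : ResidueField.map (frobenius A p) = frobenius (ResidueField A) p := by
    ext x
    obtain ⟨x, rfl⟩ := residue_surjective x
    exact map_pow (residue A) x p
  rw [length_scalarsAlong, hres, frobeniusDegree]

lemma length_scalarsAlong_iterateFrobenius (e : ℕ) (M : Type*) [AddCommGroup M] [Module A M] :
    Module.length A (ScalarsAlong (iterateFrobenius A p e) M) =
      Module.length A M * frobeniusDegree (ResidueField A) p ^ e := by
  induction e with
  | zero =>
    rw [pow_zero, mul_one, iterateFrobenius_zero]
    rfl
  | succ e ih =>
    rw [pow_succ, ← mul_assoc, ← ih, ← length_scalarsAlong_frobenius, iterateFrobenius_add,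
      iterateFrobenius_one]
    rfl

end FrobeniusPushforward

lemma frobeniusDegree_residueField_eq_finrank {A : Type*} [CommRing A] [IsLocalRing A]
    (p : ℕ) (hp : p.Prime) [CharP A p] [CharP (IsLocalRing.ResidueField A) p]
    [ExpChar (IsLocalRing.ResidueField A) p]
    (hA : letI := frobModule p hp A; Module.Finite A (FrobMod A)) :
    letI := frobModule p hp (IsLocalRing.ResidueField A)
    frobeniusDegree (IsLocalRing.ResidueField A) p =
      Module.finrank (IsLocalRing.ResidueField A) (FrobMod (IsLocalRing.ResidueField A)) := by
  let κ := IsLocalRing.ResidueField A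
  let _ := frobModule p hp A
  let _ := frobModule p hp κ
  have : Module.Finite A (FrobMod A) := hA
  let f : FrobMod A →ₛₗ[IsLocalRing.residue A] FrobMod κ :=
    { (IsLocalRing.residue A).toAddMonoidHom with
      map_smul' a (x : A) := by
        change IsLocalRing.residue A (a ^ p * x) =
          IsLocalRing.residue A a ^ p * IsLocalRing.residue A x
        rw [map_mul, map_pow] }
  have : RingHomSurjective (IsLocalRing.residue A) := ⟨IsLocalRing.residue_surjective⟩
  have : Module.Finite κ (FrobMod κ) :=
    Module.Finite.of_surjective f (IsLocalRing.residue_surjective (R := A))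
  exact Module.length_eq_finrank κ (FrobMod κ)

section SplittingNumber

open IsLocalRing

/-- The `p^e`-Cartier maps `A → A`, that is `C_{e,A}`, as a left `A`-module. -/
def cartierMaps (A : Type*) [CommRing A] (p e : ℕ) : Submodule A (A →+ A) where
  carrier := {φ | IsCartierMap p A e φ}
  add_mem' hφ hψ a x := by simp only [AddMonoidHom.add_apply, hφ a x, hψ a x, smul_add]
  zero_mem' a _ := (smul_zero a).symm
  smul_mem' r φ hφ a x := by simp only [AddMonoidHom.smul_apply, hφ a x, smul_comm r a]

/-- The degree-`e` part of a Cartier subalgebra of `C_A`: a set of `p^e`-Cartier maps closed under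
addition and under left and right multiplication by `A`. It may be empty. -/
structure IsCartierBimodule {A : Type*} [CommRing A] (p e : ℕ) (D : Set (A →+ A)) : Prop where
  isCartierMap : ∀ φ ∈ D, IsCartierMap p A e φ
  add_mem : ∀ φ ∈ D, ∀ ψ ∈ D, φ + ψ ∈ D
  smul_mem : ∀ (a : A), ∀ φ ∈ D, a • φ ∈ D
  comp_mulLeft_mem : ∀ (a : A), ∀ φ ∈ D, φ.comp (AddMonoidHom.mulLeft a) ∈ D

/-- The splitting ideal `I_e = {x | φ (A x) ⊆ m for all φ ∈ D}` of a family `D` of additive maps on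
a local ring. -/
def splittingIdeal {A : Type*} [CommRing A] [IsLocalRing A] (D : Set (A →+ A)) : Ideal A where
  carrier := {x | ∀ φ ∈ D, ∀ a, φ (a * x) ∈ maximalIdeal A}
  add_mem' hx hy φ hφ a := by
    rw [mul_add, map_add]
    exact add_mem (hx φ hφ a) (hy φ hφ a)
  zero_mem' φ _ a := by simp
  smul_mem' r x hx φ hφ a := by
    rw [smul_eq_mul, ← mul_assoc]
    exact hx φ hφ (a * r)

variable {A : Type*} [CommRing A] [IsLocalRing A] {p e : ℕ} {D : Set (A →+ A)}

lemma pow_mem_splittingIdeal (hD : ∀ φ ∈ D, IsCartierMap p A e φ) {x : A}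
    (hx : x ∈ maximalIdeal A) : x ^ p ^ e ∈ splittingIdeal D := by
  intro φ hφ a
  rw [mul_comm, ← smul_eq_mul, hD φ hφ]
  exact Ideal.mul_mem_right _ _ hx

omit [IsLocalRing A] in
lemma IsCartierBimodule.mem_of_mem_span (hD : IsCartierBimodule p e D) {φ : A →+ A}
    (hφ : φ ∈ Submodule.span A D) : φ = 0 ∨ φ ∈ D := by
  induction hφ using Submodule.span_induction with
  | mem φ hφ => exact .inr hφ
  | zero => exact .inl rfl
  | add φ ψ _ _ hφ hψ =>
    rcases hφ with rfl | hφ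
    · rwa [zero_add]
    rcases hψ with rfl | hψ
    · exact .inr (by rwa [add_zero])
    exact .inr (hD.add_mem φ hφ ψ hψ)
  | smul a φ _ hφ =>
    rcases hφ with rfl | hφ
    · exact .inl (smul_zero a)
    exact .inr (hD.smul_mem a φ hφ)

variable (A p e) in
/-- The `A`-bilinear evaluation pairing `C_{e,A} × F^e_* A → A ⧸ m`, `(φ, x) ↦ φ x mod m`. -/
noncomputable def cartierPairing [ExpChar A p] :
    cartierMaps A p e →ₗ[A] ScalarsAlong (iterateFrobenius A p e) A →ₗ[A] ResidueField A :=
  LinearMap.mk₂ A (fun φ (x : A) => residue A (φ.1 x))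
    (fun _ _ _ => map_add (residue A) _ _) (fun _ _ _ => map_mul (residue A) _ _)
    (fun φ (x y : A) => by
      change residue A (φ.1 (x + y)) = residue A (φ.1 x) + residue A (φ.1 y)
      rw [map_add, map_add])
    (fun a φ (x : A) => by
      change residue A (φ.1 (a ^ p ^ e * x)) = residue A a * residue A (φ.1 x)
      rw [← smul_eq_mul, φ.2 a x, smul_eq_mul, map_mul])

omit [IsLocalRing A] in
lemma IsCartierBimodule.mem_span_nonsplitting_iff (hD : IsCartierBimodule p e D) (I : Ideal A)
    {φ : A →+ A} (hφ : φ ∈ Submodule.span A D) :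
    φ ∈ Submodule.span A {φ ∈ D | ∀ x, φ x ∈ I} ↔ ∀ x, φ x ∈ I := by
  refine ⟨fun h x => ?_, fun h => ?_⟩
  · clear hφ
    induction h using Submodule.span_induction with
    | mem φ hφ => exact hφ.2 x
    | zero => exact I.zero_mem
    | add φ ψ _ _ hφ hψ => exact I.add_mem hφ hψ
    | smul a φ _ hφ => exact I.mul_mem_left a hφ
  · rcases hD.mem_of_mem_span hφ with rfl | hφ
    · exact zero_mem _
    · exact Submodule.subset_span ⟨hφ, h⟩

theorem splitNum_eq_length_mul_frobeniusDegree_pow [ExpChar A p] [ExpChar (ResidueField A) p]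
    (hD : IsCartierBimodule p e D) :
    splitNum A D = ((Module.length A (A ⧸ splittingIdeal D) *
      frobeniusDegree (ResidueField A) p ^ e : ℕ∞) : WithBot ℕ∞) := by
  let F := ScalarsAlong (iterateFrobenius A p e) A
  let B : Submodule.span A D →ₗ[A] F →ₗ[A] ResidueField A :=
    (cartierPairing A p e).comp (Submodule.inclusion (Submodule.span_le.mpr hD.isCartierMap))
  let π : F →ₗ[A] ScalarsAlong (iterateFrobenius A p e) (A ⧸ splittingIdeal D) :=
    { Ideal.Quotient.mk (splittingIdeal D) with map_smul' _ _ := rfl }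
  have hB (φ) : B φ = 0 ↔ φ.1 ∈ Submodule.span A {φ ∈ D | ∀ x, φ x ∈ maximalIdeal A} := by
    rw [hD.mem_span_nonsplitting_iff _ φ.2]
    simp only [LinearMap.ext_iff, ← residue_eq_zero_iff]
    rfl
  have hker : LinearMap.ker B.flip = LinearMap.ker π := by
    ext (x : A)
    refine Iff.trans ?_ (Ideal.Quotient.eq_zero_iff_mem (I := splittingIdeal D)).symm
    refine ⟨fun h φ hφ a => ?_, fun h => LinearMap.ext fun φ => ?_⟩
    · have hφa := Submodule.subset_span (R := A) (hD.comp_mulLeft_mem a φ hφ)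
      exact (residue_eq_zero_iff _).mp (LinearMap.congr_fun h ⟨_, hφa⟩)
    · refine (residue_eq_zero_iff _).mpr (?_ : φ.1 x ∈ maximalIdeal A)
      rcases hD.mem_of_mem_span φ.2 with h0 | hφ
      · rw [h0]
        exact zero_mem _
      · simpa only [one_mul] using h φ.1 hφ 1
  have hπ : Function.Surjective π := Ideal.Quotient.mk_surjective (I := splittingIdeal D)
  rw [← length_scalarsAlong_iterateFrobenius, ← length_map_mkQ_eq_length_of_pairing
    (κ := ResidueField A) residue_surjective B hB π hπ hker, Module.coe_length]
  rfl

end SplittingNumber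

section Pullback

variable {R S : Type*} [CommRing R] [CommRing S]

lemma isCartierBimodule_pushFam {p e : ℕ} {D : ℕ → Set (R →+ R)} {tr : ℕ → (R →+ R) → (S →+ S)}
    (htr : ∀ φ ∈ D e, IsCartierMap p S e (tr e φ)) :
    IsCartierBimodule p e (pushFam D tr e) where
  isCartierMap := by
    rintro _ ⟨k, φ, s, hφ, rfl⟩ a x
    simp only [AddMonoidHom.finsetSum_apply, AddMonoidHom.comp_apply, AddMonoidHom.coe_mulLeft,
      mul_smul_comm, Finset.smul_sum, htr _ (hφ _) a]
  add_mem := by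
    rintro _ ⟨k, φ, s, hφ, rfl⟩ _ ⟨l, φ', s', hφ', rfl⟩
    refine ⟨k + l, Fin.append φ φ', Fin.append s s', fun i => ?_, ?_⟩
    · cases i using Fin.addCases with
      | left i => simpa using hφ i
      | right i => simpa using hφ' i
    · simp [Fin.sum_univ_add]
  smul_mem := by
    rintro a _ ⟨k, φ, s, hφ, rfl⟩
    refine ⟨k, φ, fun i => a ^ p ^ e • s i, hφ, ?_⟩
    ext x
    simp only [AddMonoidHom.smul_apply, AddMonoidHom.finsetSum_apply, AddMonoidHom.comp_apply,
      AddMonoidHom.coe_mulLeft, Finset.smul_sum, smul_mul_assoc, htr _ (hφ _) a]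
  comp_mulLeft_mem := by
    rintro a _ ⟨k, φ, s, hφ, rfl⟩
    refine ⟨k, φ, fun i => s i * a, hφ, ?_⟩
    ext x
    simp only [AddMonoidHom.finsetSum_apply, AddMonoidHom.comp_apply, AddMonoidHom.coe_mulLeft,
      mul_assoc]

variable [Algebra R S] (T : S →ₗ[R] R)

/-- The ideal `{s | T (s S) ⊆ I}` of `S`, the largest one that `T` maps into `I`. -/
def tracePullback (I : Ideal R) : Ideal S where
  carrier := {s | ∀ x, T (s * x) ∈ I}
  add_mem' hs ht x := by
    rw [add_mul, map_add]
    exact add_mem (hs x) (ht x)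
  zero_mem' x := by simp
  smul_mem' r s hs x := by
    rw [smul_eq_mul, mul_assoc, mul_left_comm]
    exact hs (r * x)

variable [IsLocalRing R] [IsLocalRing S] {T}

open IsLocalRing

lemma splittingIdeal_pushFam {p e : ℕ} {D : ℕ → Set (R →+ R)} {tr : ℕ → (R →+ R) → (S →+ S)}
    (hT : Function.Surjective T) (hTm : ∀ s ∈ maximalIdeal S, T s ∈ maximalIdeal R)
    (htr : ∀ φ ∈ D e, IsTranspose p T e φ (tr e φ)) :
    splittingIdeal (pushFam D tr e) = tracePullback T (splittingIdeal (D e)) := by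
  have hmem (s : S) : s ∈ tracePullback T (splittingIdeal (D e)) ↔
      ∀ φ ∈ D e, ∀ x, φ (T (s * x)) ∈ maximalIdeal R := by
    refine ⟨fun h φ hφ x => by simpa using h x φ hφ 1, fun h x φ hφ r => ?_⟩
    rw [← smul_eq_mul, ← map_smul, ← mul_smul_comm]
    exact h φ hφ (r • x)
  ext s
  rw [hmem]
  constructor
  · intro h φ hφ x
    have hx : tr e φ (x * s) ∈ maximalIdeal S :=
      h _ ⟨1, fun _ => φ, fun _ => 1, fun _ => hφ, by ext; simp⟩ x
    have hT1 := htr φ hφ (x * s) 1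
    rw [one_pow, mul_one, mul_one, mul_comm x] at hT1
    exact hT1 ▸ hTm _ (mul_comm x s ▸ hx)
  · rintro h _ ⟨k, φ, t, hφ, rfl⟩ a
    rw [AddMonoidHom.finsetSum_apply]
    refine sum_mem fun i _ => ?_
    change tr e (φ i) (t i * (a * s)) ∈ maximalIdeal S
    -- If this value were a unit, then transposition would turn a preimage of `1` under `T` into a
    -- value of `φ i` equal to `1`.
    by_contra hunit
    obtain ⟨v, hv⟩ := notMem_maximalIdeal.mp hunit
    obtain ⟨u, hu⟩ := hT 1
    have h1 := htr (φ i) (hφ i) (t i * (a * s)) (↑v⁻¹ * u)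
    rw [← hv, Units.mul_inv_cancel_left, hu] at h1
    have h2 := h (φ i) (hφ i) (t i * a * (↑v⁻¹ * u) ^ p ^ e)
    rw [show s * (t i * a * (↑v⁻¹ * u) ^ p ^ e) = t i * (a * s) * (↑v⁻¹ * u) ^ p ^ e by ring,
      ← h1] at h2
    exact (Ideal.ne_top_iff_one _).mp (maximalIdeal.isMaximal R).ne_top h2

end Pullback

section RankComparison

open scoped Pointwise

variable {R M N : Type*} [CommRing R] [AddCommGroup M] [Module R M] [AddCommGroup N] [Module R N]

lemma length_quotient_le_add_length_quotSMulTop {M' : Submodule R M} {N' : Submodule R N} {c : R}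
    {f : M →ₗ[R] N} {g : N →ₗ[R] M} (hf : M' ≤ N'.comap f) (hg : N' ≤ M'.comap g)
    (h : ∀ x, g (f x) = c • x) :
    Module.length R (M ⧸ M') ≤
      Module.length R (N ⧸ N') + Module.length R (QuotSMulTop c (M ⧸ M')) := by
  refine length_le_add_length_quotSMulTop c (M'.mapQ N' f hf) (N'.mapQ M' g hg) fun x => ?_
  obtain ⟨x, rfl⟩ := Submodule.Quotient.mk_surjective _ x
  simp only [Submodule.mapQ_apply, h, Submodule.Quotient.mk_smul]

lemma le_annihilator_quotient_of_smul_top_le {I : Ideal R} {M' : Submodule R M}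
    (h : I • (⊤ : Submodule R M) ≤ M') : I ≤ Module.annihilator R (M ⧸ M') := by
  refine fun a ha => Module.mem_annihilator.mpr fun x => ?_
  obtain ⟨x, rfl⟩ := Submodule.Quotient.mk_surjective _ x
  exact (Submodule.Quotient.mk_eq_zero _).mpr (h (Submodule.smul_mem_smul ha trivial))

variable [IsDomain R]

lemma exists_ne_zero_forall_smul_mem_of_finrank_eq [Module.Finite R M] (M' : Submodule R M)
    (h : Module.finrank R M' = Module.finrank R M) : ∃ c : R, c ≠ 0 ∧ ∀ x, c • x ∈ M' := by
  have hrank : Module.finrank R (M ⧸ M') = 0 := by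
    have := M'.finrank_quotient_add_finrank
    omega
  obtain ⟨c, hc, hc0⟩ := Submodule.annihilator_top_inter_nonZeroDivisors
    (Module.finrank_eq_zero_iff_isTorsion.mp hrank)
  refine ⟨c, nonZeroDivisors.ne_zero hc0, fun x => (Submodule.Quotient.mk_eq_zero _).mp ?_⟩
  exact Submodule.mem_annihilator.mp hc (Submodule.Quotient.mk x) trivial

lemma exists_quasi_inverse_of_injective_of_finrank_eq [Module.Finite R N] (f : M →ₗ[R] N)
    (hf : Function.Injective f) (h : Module.finrank R M = Module.finrank R N) :
    ∃ c : R, c ≠ 0 ∧ ∃ g : N →ₗ[R] M, (∀ x, g (f x) = c • x) ∧ ∀ y, f (g y) = c • y := by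
  obtain ⟨c, hc, hcf⟩ := exists_ne_zero_forall_smul_mem_of_finrank_eq (LinearMap.range f)
    ((LinearMap.finrank_range_of_inj hf).trans h)
  let g := (LinearEquiv.ofInjective f hf).symm.toLinearMap ∘ₗ
    (LinearMap.lsmul R N c).codRestrict (LinearMap.range f) hcf
  have hfg (y) : f (g y) = c • y :=
    congrArg Subtype.val ((LinearEquiv.ofInjective f hf).apply_symm_apply ⟨c • y, hcf y⟩)
  exact ⟨c, hc, g, fun x => hf (by rw [hfg, map_smul]), hfg⟩

lemma exists_injective_pi_flip [Module.Finite R M] [Module.IsTorsionFree R N]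
    {B : M →ₗ[R] M →ₗ[R] N} (hB : Function.Injective B) :
    ∃ s : Fin (Module.finrank R M) → M,
      Function.Injective (LinearMap.pi fun i => B.flip (s i)) := by
  obtain ⟨s, hs⟩ := exists_linearIndependent_of_le_finrank (R := R) (M := M) le_rfl
  obtain ⟨c, hc, hcs⟩ := exists_ne_zero_forall_smul_mem_of_finrank_eq
    (Submodule.span R (Set.range s)) (by rw [finrank_span_eq_card hs, Fintype.card_fin])
  refine ⟨s, (injective_iff_map_eq_zero _).mpr fun x hx => (map_eq_zero_iff B hB).mp ?_⟩
  have hspan : Submodule.span R (Set.range s) ≤ LinearMap.ker (B x) :=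
    Submodule.span_le.mpr (Set.range_subset_iff.mpr fun i => congrFun hx i)
  ext y
  refine (smul_eq_zero_iff_right hc).mp ?_
  rw [← map_smul]
  exact hspan (hcs y)

theorem exists_length_quotient_compare_finrank_mul [Module.Finite R M]
    {B : M →ₗ[R] M →ₗ[R] R} (hB : Function.Injective B) :
    ∃ c : R, c ≠ 0 ∧ ∃ k : ℕ, ∀ (I : Ideal R) (M' : Submodule R M),
      (∀ x ∈ M', ∀ y, B x y ∈ I) → I • (⊤ : Submodule R M) ≤ M' →
      Module.length R (M ⧸ M') ≤ Module.finrank R M * Module.length R (R ⧸ I) +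
        k * Module.length R (R ⧸ (I ⊔ Ideal.span {c})) ∧
      Module.finrank R M * Module.length R (R ⧸ I) ≤ Module.length R (M ⧸ M') +
        k * Module.length R (R ⧸ (I ⊔ Ideal.span {c})) := by
  obtain ⟨s, hs⟩ := exists_injective_pi_flip hB
  obtain ⟨c, hc, g, hgf, hfg⟩ := exists_quasi_inverse_of_injective_of_finrank_eq
    (LinearMap.pi fun i => B.flip (s i)) hs (Module.finrank_fin_fun R).symm
  obtain ⟨m, π, hπ⟩ := Module.Finite.exists_fin' R M
  refine ⟨c, hc, m + Module.finrank R M, fun I M' hBI hI => ?_⟩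
  let N' : Submodule R (Fin (Module.finrank R M) → R) := Submodule.pi Set.univ fun _ => I
  have hf : M' ≤ N'.comap (LinearMap.pi fun i => B.flip (s i)) := fun x hx i _ => hBI x hx (s i)
  have hN' : I • ⊤ ≤ N' := Submodule.smul_le.mpr fun a ha y _ i _ => I.mul_mem_right (y i) ha
  have hg : N' ≤ M'.comap g := by
    intro y hy
    rw [Submodule.mem_comap, LinearMap.pi_apply_eq_sum_univ]
    exact sum_mem fun i _ => hI (Submodule.smul_mem_smul (hy i trivial) trivial)
  have hlen : Module.length R ((Fin (Module.finrank R M) → R) ⧸ N') =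
      Module.finrank R M * Module.length R (R ⧸ I) := by
    rw [(Submodule.quotientPi fun _ => I).length_eq, Module.length_pi,
      ENat.card_eq_coe_fintype_card, Fintype.card_fin]
  have hM := length_quotSMulTop_le_card_mul c (M'.mkQ ∘ₗ π) (M'.mkQ_surjective.comp hπ)
    (le_annihilator_quotient_of_smul_top_le hI)
  have hN := length_quotSMulTop_le_card_mul c N'.mkQ N'.mkQ_surjective
    (le_annihilator_quotient_of_smul_top_le hN')
  rw [Fintype.card_fin] at hM hN
  rw [← hlen, Nat.cast_add, add_mul]
  constructor
  · calc _ ≤ _ := length_quotient_le_add_length_quotSMulTop hf hg hgf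
      _ ≤ _ := by gcongr; exact hM.trans le_self_add
  · calc _ ≤ _ := length_quotient_le_add_length_quotSMulTop hg hf hfg
      _ ≤ _ := by gcongr; exact hN.trans le_add_self

end RankComparison

section HilbertKunz

open IsLocalRing

variable {A : Type*} [CommRing A] [IsLocalRing A] [IsNoetherianRing A]

lemma exists_card_le_length_quotient_span_ne_top {d : ℕ} (hd : ringKrullDim A ≤ d) :
    ∃ s : Finset A, s.card ≤ d ∧ (s : Set A) ⊆ maximalIdeal A ∧
      Module.length A (A ⧸ Ideal.span (s : Set A)) ≠ ⊤ := by
  obtain ⟨s, hs, hcard⟩ := (maximalIdeal A).exists_finset_card_eq_height_of_isNoetherianRing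
  refine ⟨s, ?_, Ideal.subset_span.trans hs.1.2, ?_⟩
  · rw [← maximalIdeal_height_eq_ringKrullDim, ← hcard] at hd
    exact_mod_cast hd
  · have := quotient_artinian_of_mem_minimalPrimes_of_isLocalRing _ hs
    have : IsArtinian A (A ⧸ Ideal.span (s : Set A)) :=
      isArtinian_of_surjective_algebraMap (R := A ⧸ Ideal.span (s : Set A))
        Ideal.Quotient.mk_surjective
    exact Module.length_ne_top

theorem exists_length_quotient_le_mul_pow {d : ℕ} (hd : ringKrullDim A ≤ d) :
    ∃ N : ℕ, ∀ q : ℕ, q ≠ 0 → ∀ I : Ideal A, (∀ x ∈ maximalIdeal A, x ^ q ∈ I) →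
      Module.length A (A ⧸ I) ≤ N * q ^ d := by
  obtain ⟨s, hcard, hs, hfin⟩ := exists_card_le_length_quotient_span_ne_top hd
  obtain ⟨N, hN⟩ := ENat.ne_top_iff_exists.mp hfin
  refine ⟨N, fun q hq I hI => ?_⟩
  have hle : ⊥ ⊔ Ideal.span ((· ^ q) '' (s : Set A)) ≤ I :=
    sup_le bot_le (Ideal.span_le.mpr (Set.image_subset_iff.mpr fun x hx => hI x (hs hx)))
  calc Module.length A (A ⧸ I)
      ≤ Module.length A (A ⧸ (⊥ ⊔ Ideal.span ((· ^ q) '' (s : Set A)))) :=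
        length_quotient_le_of_le hle
    _ ≤ q ^ s.card * Module.length A (A ⧸ (⊥ ⊔ Ideal.span (s : Set A))) :=
        length_quotient_sup_span_image_pow_le q s ⊥
    _ = N * q ^ s.card := by rw [bot_sup_eq, ← hN, mul_comm]
    _ ≤ N * q ^ d := by
        gcongr
        exact_mod_cast Nat.one_le_iff_ne_zero.mpr hq

theorem exists_length_quotient_sup_span_mul_le {d : ℕ} (hd : ringKrullDim A ≤ d) {c : A}
    (hc : c ∈ nonZeroDivisors A) :
    ∃ N : ℕ, ∀ q : ℕ, q ≠ 0 → ∀ I : Ideal A, (∀ x ∈ maximalIdeal A, x ^ q ∈ I) →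
      Module.length A (A ⧸ (I ⊔ Ideal.span {c})) * q ≤ N * q ^ d := by
  by_cases hu : IsUnit c
  · refine ⟨0, fun q _ I _ => ?_⟩
    have : Subsingleton (A ⧸ (I ⊔ Ideal.span {c})) := by
      rw [Submodule.Quotient.subsingleton_iff, Ideal.span_singleton_eq_top.mpr hu, sup_top_eq]
    rw [Module.length_eq_zero, zero_mul]
    exact zero_le
  let π := Ideal.Quotient.mk (Ideal.span {c})
  have : Nontrivial (A ⧸ Ideal.span {c}) :=
    Ideal.Quotient.nontrivial_iff.mpr (by rwa [Ne, Ideal.span_singleton_eq_top])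
  have : IsLocalRing (A ⧸ Ideal.span {c}) := .of_surjective' π Ideal.Quotient.mk_surjective
  have hdim : (maximalIdeal (A ⧸ Ideal.span {c})).height + 1 ≤ (d : ℕ∞) := by
    have := (ringKrullDim_quotient_succ_le_of_nonZeroDivisor hc).trans hd
    rw [← maximalIdeal_height_eq_ringKrullDim] at this
    exact_mod_cast this
  obtain ⟨d, rfl⟩ : ∃ d', d = d' + 1 :=
    Nat.exists_eq_add_one.mpr (by exact_mod_cast le_add_self.trans hdim)
  have hdim' : ringKrullDim (A ⧸ Ideal.span {c}) ≤ d := by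
    rw [Nat.cast_add_one] at hdim
    rw [← maximalIdeal_height_eq_ringKrullDim]
    exact_mod_cast (ENat.add_le_add_iff_right ENat.one_ne_top).mp hdim
  obtain ⟨N, hN⟩ := exists_length_quotient_le_mul_pow hdim'
  refine ⟨N, fun q hq I hI => ?_⟩
  have hIπ : ∀ x ∈ maximalIdeal (A ⧸ Ideal.span {c}), x ^ q ∈ I.map π := by
    intro x hx
    obtain ⟨x, rfl⟩ := Ideal.Quotient.mk_surjective x
    exact map_pow π x q ▸ Ideal.mem_map_of_mem π (hI x fun hxu => hx (hxu.map π))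
  rw [length_quotient_sup_eq_length_quotient_map, pow_succ, ← mul_assoc]
  gcongr
  exact hN q hq _ hIπ

end HilbertKunz

section TransformationRule

open Filter IsLocalRing Topology

lemma exists_natCast_eq_and_div_eq {a r e : ℕ} {ℓ : ℕ∞} (hr : r ≠ 0) (h : (a : ℕ∞) = ℓ * r ^ e) :
    ∃ n : ℕ, ℓ = n ∧ ∀ x : ℝ, (a : ℝ) / (x * r ^ e) = n / x := by
  have hℓ : ℓ ≠ ⊤ := by
    rintro rfl
    rw [ENat.top_mul (pow_ne_zero e (by exact_mod_cast hr))] at h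
    exact ENat.natCast_ne_top a h
  obtain ⟨n, rfl⟩ := ENat.ne_top_iff_exists.mp hℓ
  refine ⟨n, rfl, fun x => ?_⟩
  have ha : (a : ℝ) = n * r ^ e := by exact_mod_cast h
  rw [ha, mul_div_mul_right _ _ (pow_ne_zero e (Nat.cast_ne_zero.mpr hr))]

lemma abs_div_pow_sub_div_pow_le {x y N q d : ℕ} (hq : 0 < q) (hxy : x * q ≤ y * q + N * q ^ d)
    (hyx : y * q ≤ x * q + N * q ^ d) :
    |(x : ℝ) / (q : ℝ) ^ d - y / (q : ℝ) ^ d| ≤ N / (q : ℝ) := by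
  have hq' : (0 : ℝ) < q := Nat.cast_pos.mpr hq
  rw [← sub_div, abs_div, abs_of_pos (pow_pos hq' d), div_le_div_iff₀ (pow_pos hq' d) hq']
  calc |(x : ℝ) - y| * q = |(x : ℝ) * q - y * q| := by rw [← sub_mul, abs_mul, abs_of_pos hq']
    _ ≤ N * q ^ d := by
      rw [abs_sub_le_iff, sub_le_iff_le_add', sub_le_iff_le_add']
      exact ⟨by exact_mod_cast hxy, by exact_mod_cast hyx⟩

variable {R S : Type*} [CommRing R] [CommRing S] [IsLocalRing R] [Algebra R S] [Module.Finite R S]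
  {T : S →ₗ[R] R}

theorem exists_length_quotient_tracePullback_compare [IsDomain R] [IsNoetherianRing R]
    (hσ : Function.Injective (sigmaT R S T)) {d : ℕ} (hd : ringKrullDim R ≤ d) :
    ∃ K : ℕ, ∀ q : ℕ, q ≠ 0 → ∀ I : Ideal R, (∀ x ∈ maximalIdeal R, x ^ q ∈ I) →
      Module.length R (S ⧸ tracePullback T I) * q ≤
        Module.finrank R S * Module.length R (R ⧸ I) * q + K * q ^ d ∧
      Module.finrank R S * Module.length R (R ⧸ I) * q ≤
        Module.length R (S ⧸ tracePullback T I) * q + K * q ^ d := by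
  obtain ⟨c, hc, k, hk⟩ := exists_length_quotient_compare_finrank_mul hσ
  obtain ⟨N, hN⟩ :=
    exists_length_quotient_sup_span_mul_le hd (mem_nonZeroDivisors_of_ne_zero hc)
  refine ⟨k * N, fun q hq I hI => ?_⟩
  have hIJ : I • (⊤ : Submodule R S) ≤ (tracePullback T I).restrictScalars R :=
    Submodule.smul_le.mpr fun a ha s _ t => by
      rw [smul_mul_assoc, map_smul]
      exact I.mul_mem_right _ ha
  have hz : k * Module.length R (R ⧸ (I ⊔ Ideal.span {c})) * q ≤ (k * N : ℕ) * q ^ d := by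
    rw [Nat.cast_mul, mul_assoc, mul_assoc]
    exact mul_le_mul_right (hN q hq I hI) _
  obtain ⟨hSR, hRS⟩ := hk I ((tracePullback T I).restrictScalars R) (fun s hs => hs) hIJ
  rw [(Submodule.Quotient.restrictScalarsEquiv R (tracePullback T I)).length_eq] at hSR hRS
  constructor
  · calc _ ≤ _ := mul_le_mul_left hSR _
      _ ≤ _ := by rw [add_mul]; gcongr
  · calc _ ≤ _ := mul_le_mul_left hRS _
      _ ≤ _ := by rw [add_mul]; gcongr

variable [IsLocalRing S] [IsLocalHom (algebraMap R S)] {p : ℕ}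
  [ExpChar S p] [ExpChar (ResidueField S) p]

lemma finrank_mul_splitNum_pushFam
    (hT : Function.Surjective T) (hTm : ∀ s ∈ maximalIdeal S, T s ∈ maximalIdeal R) {e a : ℕ}
    {D : ℕ → Set (R →+ R)} {tr : ℕ → (R →+ R) → (S →+ S)}
    (htr : ∀ φ ∈ D e, IsCartierMap p S e (tr e φ) ∧ IsTranspose p T e φ (tr e φ))
    (ha : ((a : ℕ∞) : WithBot ℕ∞) = splitNum S (pushFam D tr e)) :
    ((Module.finrank (ResidueField R) (ResidueField S) * a : ℕ) : ℕ∞) =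
      Module.length R (S ⧸ tracePullback T (splittingIdeal (D e))) *
        frobeniusDegree (ResidueField S) p ^ e := by
  rw [splitNum_eq_length_mul_frobeniusDegree_pow
    (isCartierBimodule_pushFam fun φ hφ => (htr φ hφ).1),
    splittingIdeal_pushFam hT hTm fun φ hφ => (htr φ hφ).2] at ha
  rw [length_restrictScalars R S, Module.length_eq_finrank (ResidueField R), Nat.cast_mul,
    WithBot.coe_injective ha]
  ring

variable [IsDomain R] [IsNoetherianRing R] [ExpChar R p] [ExpChar (ResidueField R) p]

theorem exists_abs_splitNum_sub_le (hp : 0 < p)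
    (hσ : Function.Injective (sigmaT R S T)) (hT : Function.Surjective T)
    (hTm : ∀ s ∈ maximalIdeal S, T s ∈ maximalIdeal R) {d : ℕ} (hd : ringKrullDim R ≤ d)
    {rk rl : ℕ} (hrk : frobeniusDegree (ResidueField R) p = rk)
    (hrl : frobeniusDegree (ResidueField S) p = rl) :
    ∃ K : ℕ, ∀ (e : ℕ) (D : ℕ → Set (R →+ R)) (tr : ℕ → (R →+ R) → (S →+ S)) (aR aS : ℕ),
      IsCartierBimodule p e (D e) →
      (∀ φ ∈ D e, IsCartierMap p S e (tr e φ) ∧ IsTranspose p T e φ (tr e φ)) →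
      ((aR : ℕ∞) : WithBot ℕ∞) = splitNum R (D e) →
      ((aS : ℕ∞) : WithBot ℕ∞) = splitNum S (pushFam D tr e) →
      |Module.finrank (ResidueField R) (ResidueField S) * ((aS : ℝ) / (p ^ (e * d) * rl ^ e)) -
        Module.finrank R S * ((aR : ℝ) / (p ^ (e * d) * rk ^ e))| ≤ K / (p : ℝ) ^ e := by
  obtain ⟨K, hK⟩ := exists_length_quotient_tracePullback_compare hσ hd
  refine ⟨K, fun e D tr aR aS hD htr haR haS => ?_⟩
  have hrk0 : rk ≠ 0 := by exact_mod_cast hrk ▸ frobeniusDegree_ne_zero (ResidueField R) p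
  have hrl0 : rl ≠ 0 := by exact_mod_cast hrl ▸ frobeniusDegree_ne_zero (ResidueField S) p
  have hR : (aR : ℕ∞) = Module.length R (R ⧸ splittingIdeal (D e)) * rk ^ e :=
    hrk ▸ WithBot.coe_injective (haR.trans (splitNum_eq_length_mul_frobeniusDegree_pow hD))
  have hS := hrl ▸ finrank_mul_splitNum_pushFam hT hTm htr haS
  obtain ⟨y, hy, hyR⟩ := exists_natCast_eq_and_div_eq hrk0 hR
  obtain ⟨x, hx, hxS⟩ := exists_natCast_eq_and_div_eq hrl0 hS
  obtain ⟨hxy, hyx⟩ := hK (p ^ e) (pow_pos hp e).ne' (splittingIdeal (D e)) fun a ha =>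
    pow_mem_splittingIdeal hD.isCartierMap ha
  rw [hx, hy] at hxy hyx
  rw [← mul_div_assoc, ← Nat.cast_mul, hxS, hyR, ← mul_div_assoc, ← Nat.cast_mul, pow_mul,
    ← Nat.cast_pow]
  exact abs_div_pow_sub_div_pow_le (pow_pos hp e) (by exact_mod_cast hxy) (by exact_mod_cast hyx)

theorem fSignature_transformation_rule_general (hp : p.Prime)
    (hσ : Function.Injective (sigmaT R S T)) (hT : Function.Surjective T)
    (hTm : ∀ s ∈ maximalIdeal S, T s ∈ maximalIdeal R)
    {C : ℕ → Set (R →+ R)} (hC : ∀ e, 1 ≤ e → IsCartierBimodule p e (C e))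
    {tr : ℕ → (R →+ R) → (S →+ S)} (htr : ∀ e, 1 ≤ e → ∀ φ ∈ C e,
      IsCartierMap p S e (tr e φ) ∧ IsTranspose p T e φ (tr e φ)) {aR aS : ℕ → ℕ}
    (haR : ∀ e, 1 ≤ e → ((aR e : ℕ∞) : WithBot ℕ∞) = splitNum R (C e))
    (haS : ∀ e, 1 ≤ e → ((aS e : ℕ∞) : WithBot ℕ∞) = splitNum S (pushFam C tr e))
    {d : ℕ} (hd : ringKrullDim R = d) {rk rl : ℕ}
    (hrk : frobeniusDegree (ResidueField R) p = rk)
    (hrl : frobeniusDegree (ResidueField S) p = rl)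
    {u : ℕ → ℕ} (hu : Tendsto u atTop atTop) {sR sS : ℝ}
    (hsR : Tendsto (fun i => (aR (u i) : ℝ) / ((p : ℝ) ^ (u i * d) * (rk : ℝ) ^ u i))
      atTop (𝓝 sR))
    (hsS : Tendsto (fun i => (aS (u i) : ℝ) / ((p : ℝ) ^ (u i * d) * (rl : ℝ) ^ u i))
      atTop (𝓝 sS)) :
    (Module.finrank (ResidueField R) (ResidueField S) : ℝ) * sS =
      (Module.finrank R S : ℝ) * sR := by
  obtain ⟨K, hK⟩ := exists_abs_splitNum_sub_le hp.pos hσ hT hTm hd.le hrk hrl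
  have hbound : Tendsto (fun i => (K : ℝ) / (p : ℝ) ^ u i) atTop (𝓝 0) :=
    ((tendsto_pow_atTop_atTop_of_one_lt (Nat.one_lt_cast.mpr hp.one_lt)).comp hu).const_div_atTop _
  have hdiff := (hsS.const_mul (Module.finrank (ResidueField R) (ResidueField S) : ℝ)).sub
    (hsR.const_mul (Module.finrank R S : ℝ))
  refine sub_eq_zero.mp (tendsto_nhds_unique hdiff (squeeze_zero_norm' ?_ hbound))
  filter_upwards [hu.eventually_ge_atTop 1] with i hi
  exact hK (u i) C tr _ _ (hC _ hi) (htr _ hi) (haR _ hi) (haS _ hi)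

end TransformationRule

lemma CartierStructure.isCartierBimodule {p : ℕ} {A : Type*} [CommRing A]
    (C : CartierStructure p A A) {e : ℕ} (he : 1 ≤ e) : IsCartierBimodule p e (C.carrier e) where
  isCartierMap := C.cartier_mem e he
  add_mem := C.add_mem e he
  smul_mem := C.smul_mem e he
  comp_mulLeft_mem := C.mul_mem e he

/-- **Transformation rule for the F-signature under finite covers:**
`[l : k] · s(S, f^*C) = [L : K] · s(R, C)`. -/
theorem fSignature_transformation_rule
    (p : ℕ) (hp : p.Prime) (R S : Type*) [CommRing R] [CommRing S]
    [IsDomain R] [IsDomain S] [IsNoetherianRing R] [IsNoetherianRing S]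
    [IsLocalRing R] [IsLocalRing S] [CharP R p] [CharP S p]
    [Algebra R S] [Module.Finite R S]
    (hinj : Function.Injective (algebraMap R S))
    (hloc : (IsLocalRing.maximalIdeal S).comap (algebraMap R S) = IsLocalRing.maximalIdeal R)
    [IsLocalHom (algebraMap R S)]
    (hFfR : letI := frobModule p hp R; Module.Finite R (FrobMod R))
    (hFfS : letI := frobModule p hp S; Module.Finite S (FrobMod S))
    (T : S →ₗ[R] R)
    (hσinj : Function.Injective ⇑(sigmaT R S T))
    (K : Type*) [Field K] [Algebra R K] [IsFractionRing R K]
    (hσgen : Function.Bijective ⇑(LinearMap.baseChange K (sigmaT R S T)))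
    (hTsurj : Function.Surjective ⇑T)
    (hTn : ∀ s ∈ IsLocalRing.maximalIdeal S, T s ∈ IsLocalRing.maximalIdeal R)
    (C : CartierStructure p R R) (tr : ℕ → (R →+ R) → (S →+ S))
    (htr : ∀ e, 1 ≤ e → ∀ φ ∈ C.carrier e,
      IsCartierMap p S e (tr e φ) ∧ IsTranspose p T e φ (tr e φ))
    (aR aS : ℕ → ℕ)
    (haR : ∀ e, 1 ≤ e → ((aR e : ℕ∞) : WithBot ℕ∞) = splitNum R (C.carrier e))
    (haS : ∀ e, 1 ≤ e → ((aS e : ℕ∞) : WithBot ℕ∞) = splitNum S (pushFam C.carrier tr e))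
    (hex : ∃ e, 1 ≤ e ∧ aR e ≠ 0)
    (n₀ : ℕ) (hn₀pos : 0 < n₀)
    (hn₀dvd : ∀ e, 1 ≤ e → aR e ≠ 0 → n₀ ∣ e)
    (hn₀gcd : ∀ m : ℕ, (∀ e, 1 ≤ e → aR e ≠ 0 → m ∣ e) → m ∣ n₀)
    (d : ℕ) (hd : ringKrullDim R = d) (hd' : ringKrullDim S = d)
    [CharP (IsLocalRing.ResidueField R) p] [CharP (IsLocalRing.ResidueField S) p]
    (rk : ℕ)
    (hrk : letI := frobModule p hp (IsLocalRing.ResidueField R)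
      rk = Module.finrank (IsLocalRing.ResidueField R) (FrobMod (IsLocalRing.ResidueField R)))
    (rl : ℕ)
    (hrl : letI := frobModule p hp (IsLocalRing.ResidueField S)
      rl = Module.finrank (IsLocalRing.ResidueField S) (FrobMod (IsLocalRing.ResidueField S)))
    (lk : ℕ)
    (hlk : letI : Algebra (IsLocalRing.ResidueField R) (IsLocalRing.ResidueField S) :=
        (IsLocalRing.ResidueField.map (algebraMap R S)).toAlgebra
      lk = Module.finrank (IsLocalRing.ResidueField R) (IsLocalRing.ResidueField S))
    (L : Type*) [Field L] [Algebra S L] [IsFractionRing S L] [Algebra K L]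
    [Algebra R L] [IsScalarTower R K L] [IsScalarTower R S L]
    (nLK : ℕ) (hnLK : nLK = Module.finrank K L)
    (sR sS : ℝ)
    (hsR : Filter.Tendsto
      (fun e : ℕ => (aR (n₀ * e) : ℝ) / ((p : ℝ) ^ (n₀ * e * d) * (rk : ℝ) ^ (n₀ * e)))
      Filter.atTop (nhds sR))
    (hsS : Filter.Tendsto
      (fun e : ℕ => (aS (n₀ * e) : ℝ) / ((p : ℝ) ^ (n₀ * e * d) * (rl : ℝ) ^ (n₀ * e)))
      Filter.atTop (nhds sS)) :
    (lk : ℝ) * sS = (nLK : ℝ) * sR := by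
  have : Fact p.Prime := ⟨hp⟩
  have : FaithfulSMul R S := (faithfulSMul_iff_algebraMap_injective R S).mpr hinj
  rw [hlk, hnLK, IsFractionRing.finrank_eq R K S L]
  exact fSignature_transformation_rule_general hp hσinj hTsurj hTn
    (fun _ he => C.isCartierBimodule he) htr haR haS hd
    (hrk ▸ frobeniusDegree_residueField_eq_finrank p hp hFfR)
    (hrl ▸ frobeniusDegree_residueField_eq_finrank p hp hFfS)
    (Filter.tendsto_id.const_mul_atTop' hn₀pos) hsR hsS
end

section
/- Fix a prime p. Let R be a noetherian F-finite commutative ring of characteristic p, S a commutative R-algebra with R → S injective and S finitely generated as an R-module, M a finitely generated R-module, and C a Cartier structure on M. Assume that the test module τ(M,C) exists, i.e. that the set of C-stable submodules N ⊆ M such that, for every associated prime η of M, there exists j ≥ 1 with (φ_1)_η∘⋯∘(φ_j)_η (H^0_η(M_η)) ⊆ H^0_η(N_η) for all φ_i ∈ C_{e_i} with e_i ≥ 1, has a least element with respect to inclusion; and assume analogously that the test module τ(f^!M, f*C) exists, as a least element among f*C-stable S-submodules of f^!M satisfying the analogous condition at every associated prime of the S-module f^!M. Then Tr_M(τ(f^!M,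 f*C)) = τ(M, C), where Tr_M : Hom_R(S,M) → M is evaluation at 1. In particular, if τ(M,C) = M then Tr_M is surjective. -/
/-- Multiplication on the source: `(coextSMul s μ) x = μ (x * s)`. -/
def coextSMul {R S M : Type*} [CommRing R] [CommRing S] [Algebra R S]
    [AddCommGroup M] [Module R M] (s : S) (μ : S →ₗ[R] M) : S →ₗ[R] M where
  toFun x := μ (x * s)
  map_add' x y := by show μ ((x + y) * s) = μ (x * s) + μ (y * s); rw [add_mul, map_add]
  map_smul' r x := by show μ ((r • x) * s) = r • μ (x * s); rw [smul_mul_assoc, map_smul]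

/-- The coextension-of-scalars module structure on `S →ₗ[R] M`: `(s • μ) x = μ (x * s)`. -/
instance coextModule {R S M : Type*} [CommRing R] [CommRing S] [Algebra R S]
    [AddCommGroup M] [Module R M] : Module S (S →ₗ[R] M) where
  smul := coextSMul
  one_smul μ := by ext x; show μ (x * 1) = μ x; rw [mul_one]
  mul_smul s t μ := by ext x; show μ (x * (s * t)) = μ ((x * s) * t); rw [mul_assoc]
  smul_zero s := by ext x; show (0 : S →ₗ[R] M) (x * s) = 0; simp
  smul_add s μ ν := by
    ext x; show (μ + ν) (x * s) = μ (x * s) + ν (x * s); simp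
  add_smul s t μ := by ext x; show μ (x * (s + t)) = μ (x * s) + μ (x * t); rw [mul_add, map_add]
  zero_smul μ := by ext x; show μ (x * 0) = 0; rw [mul_zero, map_zero]

instance coextSMulComm {R S M : Type*} [CommRing R] [CommRing S] [Algebra R S]
    [AddCommGroup M] [Module R M] : SMulCommClass S S (S →ₗ[R] M) := by
  constructor
  intro s t μ
  ext x
  show μ ((x * s) * t) = μ ((x * t) * s)
  rw [mul_right_comm]

/-- Iterated composition `φ₀ ∘ (u^{p^{e₀}-1} • ·) ∘ φ₁ ∘ (u^{p^{e₁}-1} • ·) ∘ ⋯`,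
implementing the composite of localized maps `(φ₀)_η ∘ ⋯ ∘ (φ_{j-1})_η` on `m/u`. -/
def cartierChain (p : ℕ) {A : Type*} [Monoid A] {X : Type*} [AddCommMonoid X]
    [DistribMulAction A X] (u : A) : (j : ℕ) → (Fin j → ℕ) → (Fin j → X →+ X) → (X →+ X)
  | 0, _, _ => AddMonoidHom.id X
  | j + 1, ev, φ =>
      (((φ 0).comp (DistribMulAction.toAddMonoidHom X (u ^ (p ^ ev 0 - 1)))).comp
        (cartierChain p u j (fun i => ev i.succ) (fun i => φ i.succ)))

/-- The condition entering the definition of the test module, at an associated prime `η`: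
there is `j ≥ 1` such that every `j`-fold composite of localized maps from `D` sends the
`η`-power-torsion `H⁰_η(X_η)` into `H⁰_η(N_η)`. -/
def testCondAt (p : ℕ) (A : Type*) [CommRing A] (X : Type*) [AddCommGroup X] [Module A X]
    (D : ℕ → Set (X →+ X)) (N : Submodule A X) (η : Ideal A) (hη : η.IsPrime) : Prop :=
  haveI := hη
  ∃ j, 1 ≤ j ∧ ∀ (ev : Fin j → ℕ), (∀ i, 1 ≤ ev i) → ∀ (φ : Fin j → X →+ X),
    (∀ i, φ i ∈ D (ev i)) → ∀ (m : X) (u : η.primeCompl),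
      (∃ k : ℕ, ∀ a ∈ η ^ k, algebraMap A (Localization η.primeCompl) a •
        (LocalizedModule.mk m u : LocalizedModule η.primeCompl X) = 0) →
      ((∃ k : ℕ, ∀ a ∈ η ^ k, algebraMap A (Localization η.primeCompl) a •
          (LocalizedModule.mk (cartierChain p (u : A) j ev φ m) u :
            LocalizedModule η.primeCompl X) = 0) ∧
        ∃ n ∈ N, ∃ v : η.primeCompl,
          (LocalizedModule.mk (cartierChain p (u : A) j ev φ m) u :
            LocalizedModule η.primeCompl X) = LocalizedModule.mk n v)

/-- The collection of submodules entering the definition of the test module `τ(X, D)`: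
`D`-stable submodules `N ⊆ X` satisfying the local condition at every associated prime. -/
def testSet (p : ℕ) (A : Type*) [CommRing A] (X : Type*) [AddCommGroup X] [Module A X]
    (D : ℕ → Set (X →+ X)) : Set (Submodule A X) :=
  { N | (∀ e, 1 ≤ e → ∀ φ ∈ D e, ∀ x ∈ N, φ x ∈ N) ∧
      ∀ (η : Ideal A) (hη : IsAssociatedPrime η X), testCondAt p A X D N η hη.1 }

/-- The degree-`e` part of the Cartier structure `f^*C` on `f^!M = Hom_R(S,M)`:
maps of the form `Σᵢ φᵢ^! · sᵢ`, described pointwise by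
`(Σᵢ φᵢ^! · sᵢ)(μ)(x) = Σᵢ φᵢ (μ (x^{p^e} * sᵢ))`. -/
def pushShriek (p : ℕ) (R S : Type*) [CommRing R] [CommRing S] [Algebra R S]
    (M : Type*) [AddCommGroup M] [Module R M] (D : ℕ → Set (M →+ M)) :
    ℕ → Set ((S →ₗ[R] M) →+ (S →ₗ[R] M)) := fun e =>
  { ν | ∃ (k : ℕ) (φ : Fin k → M →+ M) (s : Fin k → S), (∀ i, φ i ∈ D e) ∧
      ∀ (μ : S →ₗ[R] M) (x : S), ν μ x = ∑ i, φ i (μ (x ^ p ^ e * s i)) }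

/-!
Both containments come from minimality. Evaluation at `1` maps `Hom_R(S, τ(M, C))` into `τ(M, C)`,
so it is enough that `Hom_R(S, N)` belongs to the collection defining `τ(f^!M, f^*C)` whenever `N`
belongs to the one defining `τ(M, C)`, and that `Tr_M(N)` belongs to the latter whenever `N` belongs
to the former.

For `Hom_R(S, N)`, associated primes of `f^!M` contract to associated primes of `M`, and the values
of a map killed by `Q^k` are killed by `(Q ∩ R)^k`.

For `Tr_M(N)`, let `η` be an associated prime of `M`. A long composite of `p^{-e}`-linear maps turns
`η`-power torsion into elements that are locally killed by `η` itself, because it divides exponents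
by `p^e`. Up to a multiplier outside `η`, an element killed by `η` is the trace of a map killed by
`ηS`: compose an `R/η`-linear functional on `S/Q`, for a prime `Q` above `η`, with `R/η → M`. Such a
map is sent into `N` locally at every prime `Q` of `S` lying over `η`, since `Q` is minimal over
`ηS` and therefore either an associated prime or a prime at which the map vanishes.
-/

/-! ### Saturation and local torsion -/

section Saturation

variable {A X : Type*} [CommSemiring A] [AddCommMonoid X] [Module A X] {U : Submonoid A}
  {N N' : Submodule A X}

/-- The saturation of `N` with respect to `U`: the preimage in `X` of the localization `U⁻¹N` of
`N`. For `U` the complement of a prime `η`, membership means belonging to `N` locally at `η`. -/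
def localSaturation (U : Submonoid A) (N : Submodule A X) : Submodule A X where
  carrier := {x | ∃ s ∈ U, s • x ∈ N}
  zero_mem' := ⟨1, U.one_mem, by simp⟩
  add_mem' := by
    rintro x y ⟨s, hs, hx⟩ ⟨t, ht, hy⟩
    refine ⟨s * t, U.mul_mem hs ht, ?_⟩
    rw [smul_add, mul_comm, mul_smul, mul_comm, mul_smul]
    exact N.add_mem (N.smul_mem t hx) (N.smul_mem s hy)
  smul_mem' := by
    rintro a x ⟨s, hs, hx⟩
    exact ⟨s, hs, smul_comm s a x ▸ N.smul_mem a hx⟩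

theorem le_localSaturation : N ≤ localSaturation U N :=
  fun x hx => ⟨1, U.one_mem, by rwa [one_smul]⟩

theorem localSaturation_mono (h : N ≤ N') : localSaturation U N ≤ localSaturation U N' :=
  fun _ ⟨s, hs, hx⟩ => ⟨s, hs, h hx⟩

theorem mem_localSaturation_of_smul_mem {s : A} (hs : s ∈ U) {x : X}
    (hx : s • x ∈ localSaturation U N) : x ∈ localSaturation U N := by
  obtain ⟨t, ht, htx⟩ := hx
  exact ⟨t * s, U.mul_mem ht hs, by rwa [mul_smul]⟩

theorem exists_forall_smul_mem_of_le_localSaturation {L : Submodule A X} (hL : L.FG)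
    (h : L ≤ localSaturation U N) : ∃ s ∈ U, ∀ x ∈ L, s • x ∈ N := by
  induction L, hL using Submodule.fg_induction with
  | singleton x =>
    obtain ⟨s, hs, hx⟩ := h (Submodule.mem_span_singleton_self x)
    refine ⟨s, hs, fun y hy => ?_⟩
    obtain ⟨a, rfl⟩ := Submodule.mem_span_singleton.mp hy
    exact smul_comm s a x ▸ N.smul_mem a hx
  | sup L₁ L₂ _ _ ih₁ ih₂ =>
    obtain ⟨s, hs, hsN⟩ := ih₁ (le_sup_left.trans h)
    obtain ⟨t, ht, htN⟩ := ih₂ (le_sup_right.trans h)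
    refine ⟨s * t, U.mul_mem hs ht, fun x hx => ?_⟩
    obtain ⟨y, hy, z, hz, rfl⟩ := Submodule.mem_sup.mp hx
    rw [smul_add, mul_comm, mul_smul, mul_comm, mul_smul]
    exact N.add_mem (N.smul_mem t (hsN y hy)) (N.smul_mem s (htN z hz))

theorem exists_mk_eq_mk_iff_mem_localSaturation {x : X} {u : U} :
    (∃ n ∈ N, ∃ v : U, LocalizedModule.mk x u = LocalizedModule.mk n v) ↔
      x ∈ localSaturation U N := by
  constructor
  · rintro ⟨n, hn, v, h⟩
    obtain ⟨w, hw⟩ := LocalizedModule.mk_eq.mp h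
    refine ⟨w * v, U.mul_mem w.2 v.2, ?_⟩
    rw [mul_smul, ← Submonoid.smul_def, ← Submonoid.smul_def, hw]
    exact N.smul_mem _ (N.smul_mem _ hn)
  · rintro ⟨s, hs, hx⟩
    refine ⟨s • x, hx, ⟨s, hs⟩ * u, LocalizedModule.mk_eq.mpr ⟨1, ?_⟩⟩
    rw [one_smul, one_smul, mul_smul, Submonoid.mk_smul, smul_comm]

theorem mk_eq_zero_iff_mem_localSaturation_bot {x : X} {u : U} :
    LocalizedModule.mk x u = 0 ↔ x ∈ localSaturation U ⊥ := by
  rw [← exists_mk_eq_mk_iff_mem_localSaturation (u := u)]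
  constructor
  · exact fun h => ⟨0, Submodule.zero_mem _, 1, by rw [h, LocalizedModule.zero_mk]⟩
  · rintro ⟨n, hn, v, h⟩
    rw [h, (Submodule.mem_bot A).mp hn, LocalizedModule.zero_mk]

end Saturation

section LocalTorsion

variable {A X : Type*} [CommRing A] [AddCommGroup X] [Module A X]

theorem mem_localSaturation_of_forall_prime {U : Submonoid A} {N : Submodule A X} {x : X}
    (h : ∀ (Q : Ideal A) [Q.IsPrime], Disjoint (Q : Set A) U →
      x ∈ localSaturation Q.primeCompl N) : x ∈ localSaturation U N := by
  by_contra hx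
  have hdisj : Disjoint (N.colon {x} : Set A) U := Set.disjoint_left.mpr fun s hs hsU =>
    hx ⟨s, hsU, Submodule.mem_colon_singleton.mp hs⟩
  obtain ⟨Q, hQ, hle, hQU⟩ := Ideal.exists_le_prime_disjoint _ _ hdisj
  obtain ⟨s, hs, hsx⟩ := h Q hQU
  exact hs (hle (Submodule.mem_colon_singleton.mpr hsx))

theorem mem_localSaturation_torsionBySet {U : Submonoid A} {I : Ideal A} (hI : I.FG) {x : X} :
    x ∈ localSaturation U (Submodule.torsionBySet A X I) ↔
      ∀ a ∈ I, a • x ∈ localSaturation U ⊥ := by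
  constructor
  · rintro ⟨s, hs, hx⟩ a ha
    rw [Submodule.mem_torsionBySet_iff] at hx
    exact ⟨s, hs, by rw [smul_comm, hx ⟨a, ha⟩, Submodule.mem_bot]⟩
  · intro h
    obtain ⟨s, hs, hsx⟩ := exists_forall_smul_mem_of_le_localSaturation
      (Submodule.FG.map (LinearMap.toSpanSingleton A X x) hI) (Submodule.map_le_iff_le_comap.mpr h)
    refine ⟨s, hs, (Submodule.mem_torsionBySet_iff _ _).mpr fun a => ?_⟩
    rw [smul_comm]
    exact hsx _ (Submodule.mem_map_of_mem a.2)

/-- The preimage in `X` of `H⁰_η(X_η)`: the elements that become `η`-power torsion in the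
localization at `η`. When `η` is not finitely generated, the power of `η` killing a multiple of the
element is required to be killed by a single multiplier. -/
def localTorsion (X : Type*) [AddCommGroup X] [Module A X] (η : Ideal A) [η.IsPrime] :
    Submodule A X :=
  ⨆ k : ℕ, localSaturation η.primeCompl (Submodule.torsionBySet A X ↑(η ^ k))

theorem monotone_localSaturation_torsionBySet_pow (U : Submonoid A) (I : Ideal A) :
    Monotone fun k : ℕ => localSaturation U (Submodule.torsionBySet A X ↑(I ^ k)) :=
  fun _ _ h => localSaturation_mono (Submodule.torsionBySet_le_torsionBySet_pow _ _ h I)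

theorem mem_localTorsion {η : Ideal A} [η.IsPrime] {x : X} :
    x ∈ localTorsion X η ↔
      ∃ k : ℕ, x ∈ localSaturation η.primeCompl (Submodule.torsionBySet A X ↑(η ^ k)) :=
  Submodule.mem_iSup_of_directed _
    (monotone_localSaturation_torsionBySet_pow η.primeCompl η).directed_le

theorem exists_localTorsion_eq [IsNoetherian A X] (η : Ideal A) [η.IsPrime] :
    ∃ k : ℕ, localTorsion X η =
      localSaturation η.primeCompl (Submodule.torsionBySet A X ↑(η ^ k)) :=
  ⟨_, WellFoundedGT.iSup_eq_monotonicSequenceLimit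
    ⟨_, monotone_localSaturation_torsionBySet_pow η.primeCompl η⟩⟩

theorem exists_pow_smul_mk_eq_zero_iff_mem_localTorsion [IsNoetherianRing A] {η : Ideal A}
    [η.IsPrime] {x : X} {u : η.primeCompl} :
    (∃ k : ℕ, ∀ a ∈ η ^ k, algebraMap A (Localization η.primeCompl) a •
      (LocalizedModule.mk x u : LocalizedModule η.primeCompl X) = 0) ↔ x ∈ localTorsion X η := by
  rw [mem_localTorsion]
  refine exists_congr fun k => ?_
  rw [mem_localSaturation_torsionBySet (IsNoetherian.noetherian _)]
  simp only [algebraMap_smul, LocalizedModule.smul'_mk, mk_eq_zero_iff_mem_localSaturation_bot]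

theorem torsionBySet_le_localTorsion_of_mem_minimalPrimes [IsNoetherianRing A] {I Q : Ideal A}
    [Q.IsPrime] (hQ : Q ∈ I.minimalPrimes) :
    Submodule.torsionBySet A X I ≤ localTorsion X Q := by
  have hrad : Q ≤ Ideal.radical (localSaturation Q.primeCompl I) := by
    intro a ha
    have hmem : algebraMap A (Localization.AtPrime Q) a ∈
        (I.map (algebraMap A (Localization.AtPrime Q))).radical := by
      rw [IsLocalization.AtPrime.radical_map_of_mem_minimalPrimes _ Q I hQ]
      exact Ideal.mem_map_of_mem _ ha
    obtain ⟨n, hn⟩ := hmem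
    rw [← map_pow, IsLocalization.algebraMap_mem_map_algebraMap_iff Q.primeCompl] at hn
    exact ⟨n, hn⟩
  obtain ⟨k, hk⟩ := Ideal.exists_pow_le_of_le_radical_of_fg hrad (IsNoetherian.noetherian Q)
  obtain ⟨s, hs, hsI⟩ :=
    exists_forall_smul_mem_of_le_localSaturation (IsNoetherian.noetherian (Q ^ k)) hk
  intro x hx
  rw [Submodule.mem_torsionBySet_iff] at hx
  refine mem_localTorsion.mpr ⟨k, s, hs, (Submodule.mem_torsionBySet_iff _ _).mpr fun a => ?_⟩
  rw [← mul_smul, mul_comm]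
  exact hx ⟨s * a, hsI a a.2⟩

theorem le_of_mem_torsionBySet_of_notMem_localSaturation_bot {I Q : Ideal A} [Q.IsPrime] {x : X}
    (hx : x ∈ Submodule.torsionBySet A X I) (hxQ : x ∉ localSaturation Q.primeCompl ⊥) :
    I ≤ Q := by
  intro a ha
  by_contra haQ
  exact hxQ ⟨a, haQ, (Submodule.mem_torsionBySet_iff _ _).mp hx ⟨a, ha⟩⟩

theorem isAssociatedPrime_of_mem_minimalPrimes [IsNoetherianRing A] {I Q : Ideal A}
    [hQp : Q.IsPrime] (hQ : Q ∈ I.minimalPrimes) {x : X} (hx : x ∈ Submodule.torsionBySet A X I)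
    (hxQ : x ∉ localSaturation Q.primeCompl ⊥) : IsAssociatedPrime Q X := by
  have hcolon : (⊥ : Submodule A X).colon {x} ≤ Q := by
    intro a ha
    by_contra haQ
    exact hxQ ⟨a, haQ, Submodule.mem_colon_singleton.mp ha⟩
  have hI : I ≤ (⊥ : Submodule A X).colon {x} := fun a ha =>
    Submodule.mem_colon_singleton.mpr ((Submodule.mem_torsionBySet_iff _ _).mp hx ⟨a, ha⟩)
  exact isAssociatedPrime_iff.mpr ⟨hQp, Submodule.exists_eq_colon_of_mem_minimalPrimes (x := x)
    ⟨⟨hQp, hcolon⟩, fun P hP hPQ => hQ.2 ⟨hP.1, hI.trans hP.2⟩ hPQ⟩⟩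

end LocalTorsion

/-! ### Composites of Cartier maps -/

namespace IsCartierMap

theorem id (p : ℕ) (A X : Type*) [CommSemiring A] [AddCommMonoid X] [Module A X] :
    IsCartierMap p A 0 (AddMonoidHom.id X) := fun a x => by
  simp only [pow_zero, pow_one, AddMonoidHom.id_apply]

theorem comp {p : ℕ} {A X Y Z : Type*} [CommSemiring A] [AddCommMonoid X] [AddCommMonoid Y]
    [AddCommMonoid Z] [Module A X] [Module A Y] [Module A Z] {e d : ℕ} {φ : Y →+ Z} {ψ : X →+ Y}
    (hφ : IsCartierMap p A e φ) (hψ : IsCartierMap p A d ψ) :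
    IsCartierMap p A (e + d) (φ.comp ψ) := fun a x => by
  rw [AddMonoidHom.comp_apply, pow_add, pow_mul, hψ, hφ, AddMonoidHom.comp_apply]

theorem apply_mem_localSaturation {p : ℕ} (hp : 0 < p) {A X Y : Type*} [CommSemiring A]
    [AddCommMonoid X] [AddCommMonoid Y] [Module A X] [Module A Y] {e : ℕ} {ψ : X →+ Y}
    (hψ : IsCartierMap p A e ψ) {U : Submonoid A} {N : Submodule A X} {N' : Submodule A Y}
    (hN : ∀ x ∈ N, ψ x ∈ localSaturation U N') {x : X} (hx : x ∈ localSaturation U N) :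
    ψ x ∈ localSaturation U N' := by
  obtain ⟨s, hs, hsx⟩ := hx
  refine mem_localSaturation_of_smul_mem hs ?_
  rw [← hψ, ← Nat.sub_add_cancel (Nat.pow_pos hp : 0 < p ^ e), pow_succ, mul_smul]
  exact hN _ (N.smul_mem _ hsx)

variable {p : ℕ} {A X : Type*} [CommRing A] [AddCommGroup X] [Module A X] {e : ℕ} {ψ : X →+ X}

theorem apply_mem_localSaturation_bot (hp : 0 < p) (hψ : IsCartierMap p A e ψ) {U : Submonoid A}
    {x : X} (hx : x ∈ localSaturation U ⊥) : ψ x ∈ localSaturation U ⊥ := by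
  refine hψ.apply_mem_localSaturation hp (fun y hy => ?_) hx
  rw [(Submodule.mem_bot A).mp hy, map_zero]
  exact Submodule.zero_mem _

theorem apply_mem_torsionBySet_pow (hψ : IsCartierMap p A e ψ) {I : Ideal A} {k d : ℕ}
    (hkd : k ≤ d * p ^ e) {x : X} (hx : x ∈ Submodule.torsionBySet A X ↑(I ^ k)) :
    ψ x ∈ Submodule.torsionBySet A X ↑(I ^ d) := by
  refine (Submodule.mem_torsionBySet_iff _ _).mpr fun a => ?_
  have ha : (a : A) ^ p ^ e ∈ I ^ k :=
    Ideal.pow_le_pow_right hkd (pow_mul I d _ ▸ Ideal.pow_mem_pow a.2 _)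
  rw [← hψ, (Submodule.mem_torsionBySet_iff _ _).mp hx ⟨_, ha⟩, map_zero]

theorem apply_mem_localTorsion (hp : 0 < p) (hψ : IsCartierMap p A e ψ) {η : Ideal A} [η.IsPrime]
    {x : X} (hx : x ∈ localTorsion X η) : ψ x ∈ localTorsion X η := by
  obtain ⟨k, hk⟩ := mem_localTorsion.mp hx
  refine mem_localTorsion.mpr ⟨k, hψ.apply_mem_localSaturation hp (fun y hy => ?_) hk⟩
  exact le_localSaturation
    (hψ.apply_mem_torsionBySet_pow (Nat.le_mul_of_pos_right k (Nat.pow_pos hp)) hy)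

end IsCartierMap

namespace CartierStructure

open scoped Pointwise

variable {p : ℕ} {A X : Type*} [CommRing A] [AddCommGroup X] [Module A X]

/-- The elements of positive degree of a Cartier structure, inside the monoid of additive
endomorphisms of `X`; the `j`-fold composites of such elements form `C.plus ^ j`. -/
def plus (C : CartierStructure p A X) : Set (AddMonoid.End X) :=
  {φ | ∃ e, 1 ≤ e ∧ φ ∈ C.carrier e}

variable {C : CartierStructure p A X}

theorem plus_mul_plus_subset : C.plus * C.plus ⊆ C.plus := by
  rintro _ ⟨φ, ⟨e, he, hφ⟩, ψ, ⟨d, hd, hψ⟩, rfl⟩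
  exact ⟨e + d, he.trans (Nat.le_add_right e d), C.comp_mem e d he hd φ hφ ψ hψ⟩

theorem plus_pow_subset_plus_pow {i j : ℕ} (hi : 1 ≤ i) (hij : i ≤ j) :
    C.plus ^ j ⊆ C.plus ^ i := by
  induction j, hij using Nat.le_induction with
  | base => exact subset_rfl
  | succ j hij ih =>
    obtain ⟨j, rfl⟩ := Nat.exists_eq_add_of_le' (hi.trans hij)
    refine subset_trans ?_ ih
    rw [pow_succ, pow_succ, mul_assoc]
    exact Set.mul_subset_mul_left plus_mul_plus_subset

theorem exists_isCartierMap_of_mem_plus_pow {j : ℕ} {ψ : AddMonoid.End X}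
    (hψ : ψ ∈ C.plus ^ j) : ∃ e, j ≤ e ∧ IsCartierMap p A e ψ := by
  induction j generalizing ψ with
  | zero =>
    obtain rfl : ψ = 1 := by simpa only [pow_zero, Set.mem_one] using hψ
    exact ⟨0, le_rfl, .id p A X⟩
  | succ j ih =>
    rw [pow_succ'] at hψ
    obtain ⟨φ, ⟨e, he, hφ⟩, ψ, hψ, rfl⟩ := hψ
    obtain ⟨d, hd, hψ⟩ := ih hψ
    exact ⟨e + d, by omega, (C.cartier_mem e he φ hφ).comp hψ⟩

theorem cartierChain_mem_plus_pow (u : A) {j : ℕ} {ev : Fin j → ℕ} (hev : ∀ i, 1 ≤ ev i)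
    {φ : Fin j → X →+ X} (hφ : ∀ i, φ i ∈ C.carrier (ev i)) :
    cartierChain p u j ev φ ∈ C.plus ^ j := by
  induction j with
  | zero => exact Set.mem_one (α := AddMonoid.End X).mpr rfl
  | succ j ih =>
    rw [pow_succ']
    exact Set.mul_mem_mul (α := AddMonoid.End X) ⟨ev 0, hev 0, C.mul_mem _ (hev 0) _ _ (hφ 0)⟩
      (ih (fun i => hev i.succ) fun i => hφ i.succ)

theorem exists_cartierChain_one_eq {j : ℕ} {ψ : AddMonoid.End X} (hψ : ψ ∈ C.plus ^ j) :
    ∃ ev : Fin j → ℕ, (∀ i, 1 ≤ ev i) ∧ ∃ φ : Fin j → X →+ X, (∀ i, φ i ∈ C.carrier (ev i)) ∧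
      cartierChain p (1 : A) j ev φ = ψ := by
  induction j generalizing ψ with
  | zero => exact ⟨Fin.elim0, Fin.rec0, Fin.elim0, Fin.rec0, (Set.mem_one.mp hψ).symm⟩
  | succ j ih =>
    rw [pow_succ'] at hψ
    obtain ⟨φ₀, ⟨e, he, hφ₀⟩, ψ, hψ, rfl⟩ := hψ
    obtain ⟨ev, hev, φ, hφ, rfl⟩ := ih hψ
    refine ⟨Fin.cons e ev, Fin.cases he hev, Fin.cons φ₀ φ, Fin.cases hφ₀ hφ, ?_⟩
    ext x
    simp only [cartierChain, Fin.cons_succ, one_pow, AddMonoidHom.comp_apply,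
      DistribMulAction.toAddMonoidHom_apply, one_smul]
    rfl

/-- The local condition of the test module at `η`, for the number `j` of maps composed: every
`j`-fold composite sends `H⁰_η(X_η)` into `N_η`. -/
def MapsTorsionInto (C : CartierStructure p A X) (η : Ideal A) [η.IsPrime] (N : Submodule A X)
    (j : ℕ) : Prop :=
  ∀ ψ ∈ C.plus ^ j, ∀ x ∈ localTorsion X η, ψ x ∈ localSaturation η.primeCompl N

theorem MapsTorsionInto.mono {η : Ideal A} [η.IsPrime] {N : Submodule A X} {i j : ℕ}
    (h : C.MapsTorsionInto η N i) (hi : 1 ≤ i) (hij : i ≤ j) : C.MapsTorsionInto η N j :=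
  fun ψ hψ => h ψ (plus_pow_subset_plus_pow hi hij hψ)

theorem testCondAt_iff [IsNoetherianRing A] (hp : 0 < p) {N : Submodule A X} {η : Ideal A}
    [hη : η.IsPrime] :
    testCondAt p A X C.carrier N η hη ↔ ∃ j, 1 ≤ j ∧ C.MapsTorsionInto η N j := by
  unfold testCondAt
  simp only [exists_pow_smul_mk_eq_zero_iff_mem_localTorsion,
    exists_mk_eq_mk_iff_mem_localSaturation]
  refine exists_congr fun j => and_congr_right fun _ => ⟨fun h ψ hψ x hx => ?_, ?_⟩
  · obtain ⟨ev, hev, φ, hφ, rfl⟩ := exists_cartierChain_one_eq hψ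
    exact (h ev hev φ hφ x 1 hx).2
  · intro h ev hev φ hφ x u hx
    have hmem := cartierChain_mem_plus_pow (u : A) hev hφ
    obtain ⟨e, -, he⟩ := exists_isCartierMap_of_mem_plus_pow hmem
    exact ⟨he.apply_mem_localTorsion hp hx, h _ hmem x hx⟩

theorem mem_testSet_iff [IsNoetherianRing A] (hp : 0 < p) {N : Submodule A X} :
    N ∈ testSet p A X C.carrier ↔ (∀ φ ∈ C.plus, ∀ x ∈ N, φ x ∈ N) ∧
      ∀ (η : Ideal A) [η.IsPrime], IsAssociatedPrime η X →
        ∃ j, 1 ≤ j ∧ C.MapsTorsionInto η N j := by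
  refine and_congr ⟨fun h φ ⟨e, he, hφ⟩ => h e he φ hφ, fun h e he φ hφ => h φ ⟨e, he, hφ⟩⟩ ?_
  exact ⟨fun h η _ hη => (testCondAt_iff hp).mp (h η hη),
    fun h η hη => have := hη.1; (testCondAt_iff hp).mpr (h η hη)⟩

theorem exists_forall_mapsTorsionInto [IsNoetherianRing A] [Module.Finite A X] (hp : 0 < p)
    {N : Submodule A X} (hN : N ∈ testSet p A X C.carrier) :
    ∃ j, 1 ≤ j ∧ ∀ (η : Ideal A) [η.IsPrime], IsAssociatedPrime η X →
      C.MapsTorsionInto η N j := by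
  have hev : ∀ᶠ j in Filter.atTop, ∀ η ∈ associatedPrimes A X, ∀ [η.IsPrime],
      C.MapsTorsionInto η N j := by
    refine (Filter.eventually_all_finite (associatedPrimes.finite A X)).mpr fun η hη => ?_
    have := hη.1
    obtain ⟨i, hi, h⟩ := ((mem_testSet_iff hp).mp hN).2 η hη
    exact (Filter.eventually_ge_atTop i).mono fun j hij _ => h.mono hi hij
  obtain ⟨j, hj, h⟩ := ((Filter.eventually_ge_atTop 1).and hev).exists
  exact ⟨j, hj, fun η _ hη => h η hη⟩

theorem apply_mem_localSaturation_of_mem_torsionBySet_map {R : Type*} [CommRing R] [Algebra R A]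
    [Algebra.IsIntegral R A] [IsNoetherianRing A] (hp : 0 < p) {N : Submodule A X} {j : ℕ}
    (hN : ∀ (Q : Ideal A) [Q.IsPrime], IsAssociatedPrime Q X → C.MapsTorsionInto Q N j)
    (η : Ideal R) [η.IsPrime] {ψ : AddMonoid.End X} (hψ : ψ ∈ C.plus ^ j) {x : X}
    (hx : x ∈ Submodule.torsionBySet A X (η.map (algebraMap R A))) :
    ψ x ∈ localSaturation (Algebra.algebraMapSubmonoid A η.primeCompl) N := by
  refine mem_localSaturation_of_forall_prime fun Q _ hQdisj => ?_
  by_cases hxQ : x ∈ localSaturation Q.primeCompl ⊥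
  · obtain ⟨e, -, he⟩ := exists_isCartierMap_of_mem_plus_pow hψ
    exact localSaturation_mono bot_le (he.apply_mem_localSaturation_bot hp hxQ)
  · have hle : Q.comap (algebraMap R A) ≤ η := fun r hr => by
      by_contra hrη
      exact Set.disjoint_left.mp hQdisj hr ⟨r, hrη, rfl⟩
    have hover : η = Q.under R := le_antisymm
      (Ideal.map_le_iff_le_comap.mp (le_of_mem_torsionBySet_of_notMem_localSaturation_bot hx hxQ))
      hle
    have hmin : Q ∈ (η.map (algebraMap R A)).minimalPrimes := by
      rw [hover]
      exact Ideal.IsIntegral.mem_minimalPrimes_map_under Q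
    exact hN Q (isAssociatedPrime_of_mem_minimalPrimes hmin hx hxQ) ψ hψ x
      (torsionBySet_le_localTorsion_of_mem_minimalPrimes hmin hx)

end CartierStructure

/-! ### The Cartier structure on `Hom_R(S, M)` -/

section Coextension

variable {p : ℕ} {R S M : Type*} [CommRing R] [CommRing S] [Algebra R S] [AddCommGroup M]
  [Module R M]

theorem coext_smul_apply (s : S) (μ : S →ₗ[R] M) (x : S) : (s • μ) x = μ (x * s) :=
  rfl

theorem coext_algebraMap_smul (r : R) (μ : S →ₗ[R] M) : algebraMap R S r • μ = r • μ := by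
  ext x
  rw [coext_smul_apply, mul_comm, ← Algebra.smul_def, map_smul, LinearMap.smul_apply]

instance coextIsScalarTower : IsScalarTower R S (S →ₗ[R] M) :=
  .of_algebraMap_smul coext_algebraMap_smul

instance coextModuleFinite [IsNoetherianRing R] [Module.Finite R S] [Module.Finite R M] :
    Module.Finite S (S →ₗ[R] M) :=
  .of_restrictScalars_finite R S (S →ₗ[R] M)

theorem mem_pushShriek_of_fintype {D : ℕ → Set (M →+ M)} {e : ℕ} {ι : Type*} [Fintype ι]
    {φ : ι → M →+ M} (hφ : ∀ i, φ i ∈ D e) (s : ι → S)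
    {ν : (S →ₗ[R] M) →+ (S →ₗ[R] M)} (hν : ∀ μ x, ν μ x = ∑ i, φ i (μ (x ^ p ^ e * s i))) :
    ν ∈ pushShriek p R S M D e := by
  let σ := (Fintype.equivFin ι).symm
  refine ⟨Fintype.card ι, φ ∘ σ, s ∘ σ, fun i => hφ (σ i), fun μ x => ?_⟩
  rw [hν]
  exact (σ.sum_comp fun i => φ i (μ (x ^ p ^ e * s i))).symm

/-- The induced Cartier structure `f^*C` on `f^!M = Hom_R(S, M)`. -/
def CartierStructure.coext (S : Type*) [CommRing S] [Algebra R S] (C : CartierStructure p R M) :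
    CartierStructure p S (S →ₗ[R] M) where
  carrier := pushShriek p R S M C.carrier
  cartier_mem := by
    rintro e - ν ⟨k, φ, s, -, hν⟩ a μ
    ext x
    simp only [coext_smul_apply, hν, mul_pow]
    exact Finset.sum_congr rfl fun i _ => by rw [mul_right_comm]
  add_mem := by
    rintro e - ν ⟨k, φ, s, hφ, hν⟩ ν' ⟨k', φ', s', hφ', hν'⟩
    refine mem_pushShriek_of_fintype (φ := Sum.elim φ φ') (Sum.rec hφ hφ') (Sum.elim s s')
      fun μ x => ?_
    rw [AddMonoidHom.add_apply, LinearMap.add_apply, hν, hν', Fintype.sum_sum_type]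
    rfl
  smul_mem := by
    rintro e - a ν ⟨k, φ, s, hφ, hν⟩
    refine ⟨k, φ, fun i => a ^ p ^ e * s i, hφ, fun μ x => ?_⟩
    simp only [AddMonoidHom.comp_apply, DistribMulAction.toAddMonoidHom_apply, coext_smul_apply,
      hν, mul_pow, mul_assoc]
  mul_mem := by
    rintro e - a ν ⟨k, φ, s, hφ, hν⟩
    refine ⟨k, φ, fun i => s i * a, hφ, fun μ x => ?_⟩
    simp only [AddMonoidHom.comp_apply, DistribMulAction.toAddMonoidHom_apply, coext_smul_apply,
      hν, mul_assoc]
  comp_mem := by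
    rintro e d he hd ν ⟨k, φ, s, hφ, hν⟩ ν' ⟨l, ψ, t, hψ, hν'⟩
    refine mem_pushShriek_of_fintype (φ := fun i : Fin k × Fin l => (φ i.1).comp (ψ i.2))
      (fun i => C.comp_mem e d he hd _ (hφ i.1) _ (hψ i.2)) (fun i => s i.1 ^ p ^ d * t i.2)
      fun μ x => ?_
    simp only [AddMonoidHom.comp_apply, hν, hν', map_sum, Fintype.sum_prod_type, mul_pow, pow_add,
      pow_mul, mul_assoc]

/-- `Hom_R(S, N)` as a submodule of `Hom_R(S, M)`: the maps with values in `N`. -/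
def coextSubmodule (S : Type*) [CommRing S] [Algebra R S] (N : Submodule R M) :
    Submodule S (S →ₗ[R] M) where
  carrier := {μ | ∀ x, μ x ∈ N}
  zero_mem' _ := N.zero_mem
  add_mem' hμ hν x := N.add_mem (hμ x) (hν x)
  smul_mem' s _ hμ x := hμ (x * s)

/-- The image `Tr_M(N)` of `N ⊆ Hom_R(S, M)` under evaluation at `1`. -/
def traceImage (N : Submodule S (S →ₗ[R] M)) : Submodule R M :=
  (N.restrictScalars R).map (LinearMap.applyₗ (1 : S))

theorem apply_one_mem_localSaturation_traceImage {U : Submonoid R} {N : Submodule S (S →ₗ[R] M)}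
    {μ : S →ₗ[R] M} (hμ : μ ∈ localSaturation (Algebra.algebraMapSubmonoid S U) N) :
    μ 1 ∈ localSaturation U (traceImage N) := by
  obtain ⟨_, ⟨r, hr, rfl⟩, hN⟩ := hμ
  exact ⟨r, hr, r • μ, coext_algebraMap_smul r μ ▸ hN, rfl⟩

/-- The Cartier map `φ^!` induced by `φ`: it sends `μ` to `x ↦ φ (μ (x ^ p ^ e))`. -/
def IsCartierMap.shriek (hp : p.Prime) (hpS : (p : S) = 0) {e : ℕ} {φ : M →+ M}
    (hφ : IsCartierMap p R e φ) : (S →ₗ[R] M) →+ (S →ₗ[R] M) where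
  toFun μ :=
    { toFun x := φ (μ (x ^ p ^ e))
      map_add' x y := by
        obtain ⟨r, hr⟩ := exists_add_pow_prime_pow_eq hp x y e
        rw [hr, hpS, zero_mul, zero_mul, zero_mul, add_zero, map_add, map_add]
      map_smul' r x := by rw [smul_pow, map_smul, hφ, RingHom.id_apply] }
  map_zero' := by ext; exact map_zero φ
  map_add' μ ν := by ext; exact map_add φ _ _

open scoped Pointwise

variable {C : CartierStructure p R M}

theorem CartierStructure.exists_mem_coext_plus_pow (hp : p.Prime) (hpS : (p : S) = 0) {j : ℕ}
    {φ : AddMonoid.End M} (hφ : φ ∈ C.plus ^ j) :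
    ∃ χ ∈ (C.coext S).plus ^ j, ∀ μ : S →ₗ[R] M, χ μ 1 = φ (μ 1) := by
  induction j generalizing φ with
  | zero =>
    obtain rfl : φ = 1 := by simpa only [pow_zero, Set.mem_one] using hφ
    exact ⟨1, by rw [pow_zero, Set.mem_one], fun μ => rfl⟩
  | succ j ih =>
    rw [pow_succ'] at hφ ⊢
    obtain ⟨φ, ⟨e, he, hφ⟩, ψ, hψ, rfl⟩ := hφ
    obtain ⟨χ, hχ, h⟩ := ih hψ
    have hshriek : (C.cartier_mem e he φ hφ).shriek hp hpS ∈ (C.coext S).carrier e :=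
      ⟨1, fun _ => φ, fun _ => 1, fun _ => hφ, fun μ x => by
        simp only [Finset.univ_unique, Finset.sum_const, Finset.card_singleton, one_smul, mul_one]
        rfl⟩
    refine ⟨_, Set.mul_mem_mul ⟨e, he, hshriek⟩ hχ, fun μ => ?_⟩
    change φ (χ μ (1 ^ p ^ e)) = φ (ψ (μ 1))
    rw [one_pow, h]

theorem CartierStructure.apply_apply_mem_of_mem_coext_plus_pow {j : ℕ}
    {χ : AddMonoid.End (S →ₗ[R] M)} (hχ : χ ∈ (C.coext S).plus ^ j) {μ : S →ₗ[R] M}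
    {T : AddSubmonoid M} (hT : ∀ φ ∈ C.plus ^ j, ∀ y, φ (μ y) ∈ T) (x : S) : χ μ x ∈ T := by
  induction j generalizing χ T x with
  | zero =>
    obtain rfl : χ = 1 := by simpa only [pow_zero, Set.mem_one] using hχ
    exact hT 1 (by rw [pow_zero, Set.mem_one]) x
  | succ j ih =>
    rw [pow_succ'] at hχ
    obtain ⟨ν, ⟨e, he, k, φ, s, hφ, hν⟩, χ, hχ, rfl⟩ := hχ
    have hsum : (ν * χ) μ x = ∑ i, φ i (χ μ (x ^ p ^ e * s i)) := hν (χ μ) x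
    rw [hsum]
    refine sum_mem fun i _ => ih hχ (T := T.comap (φ i)) (fun ψ hψ y => ?_) _
    exact hT _ (pow_succ' C.plus j ▸ Set.mul_mem_mul (s := C.plus) ⟨e, he, hφ i⟩ hψ) y

end Coextension

/-! ### Maps with values in a member of the test set -/

section Coextension

open scoped Pointwise

variable {p : ℕ} {R S M : Type*} [CommRing R] [CommRing S] [Algebra R S] [AddCommGroup M]
  [Module R M]

theorem apply_mem_torsionBySet_pow_under {Q : Ideal S} {k : ℕ} {μ : S →ₗ[R] M}
    (hμ : μ ∈ Submodule.torsionBySet S (S →ₗ[R] M) ↑(Q ^ k)) (x : S) :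
    μ x ∈ Submodule.torsionBySet R M ↑(Q.under R ^ k) := by
  refine (Submodule.mem_torsionBySet_iff _ _).mpr fun a => ?_
  have ha : algebraMap R S a ∈ Q ^ k :=
    Ideal.le_comap_pow (algebraMap R S) k a.2
  rw [← LinearMap.smul_apply, ← algebraMap_smul S (a : R) μ,
    (Submodule.mem_torsionBySet_iff _ _).mp hμ ⟨_, ha⟩, LinearMap.zero_apply]

theorem mem_localSaturation_coextSubmodule [Module.Finite R S] {Q : Ideal S} [Q.IsPrime]
    {N : Submodule R M} {μ : S →ₗ[R] M} (hμ : ∀ x, μ x ∈ localSaturation (Q.under R).primeCompl N) :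
    μ ∈ localSaturation Q.primeCompl (coextSubmodule S N) := by
  have hrange : LinearMap.range μ ≤ localSaturation (Q.under R).primeCompl N := by
    rintro _ ⟨x, rfl⟩
    exact hμ x
  obtain ⟨t, ht, htN⟩ :=
    exists_forall_smul_mem_of_le_localSaturation (Module.Finite.iff_fg.mp (.range μ)) hrange
  refine ⟨algebraMap R S t, ht, fun x => ?_⟩
  rw [algebraMap_smul]
  exact htN _ ⟨x, rfl⟩

variable [IsNoetherianRing R] [Module.Finite R S]

theorem isAssociatedPrime_under_of_coext {Q : Ideal S} (hQ : IsAssociatedPrime Q (S →ₗ[R] M)) :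
    IsAssociatedPrime (Q.under R) M := by
  have : IsNoetherianRing S := .of_finite R S
  obtain ⟨hQp, μ, hμ⟩ := isAssociatedPrime_iff.mp hQ
  have hann : Q.under R = Module.annihilator R (LinearMap.range μ) := by
    ext r
    rw [Ideal.under_def, Ideal.mem_comap, hμ, Submodule.mem_colon_singleton, Submodule.mem_bot,
      algebraMap_smul, Module.mem_annihilator, LinearMap.ext_iff]
    exact ⟨fun h ⟨_, x, hx⟩ => Subtype.ext (hx ▸ h x),
      fun h x => congrArg Subtype.val (h ⟨μ x, x, rfl⟩)⟩
  have hmin : Q.under R ∈ (Module.annihilator R (LinearMap.range μ)).minimalPrimes :=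
    hann ▸ ⟨⟨hQp.under R, le_rfl⟩, fun _ h _ => h.2⟩
  exact associatedPrimes.subset_of_injective (LinearMap.range μ).injective_subtype
    (Module.associatedPrimes.minimalPrimes_annihilator_subset_associatedPrimes R _ hmin)

theorem coextSubmodule_mem_testSet (hp : 0 < p) {C : CartierStructure p R M} {N : Submodule R M}
    (hN : N ∈ testSet p R M C.carrier) :
    coextSubmodule S N ∈ testSet p S (S →ₗ[R] M) (C.coext S).carrier := by
  have : IsNoetherianRing S := .of_finite R S
  obtain ⟨hstable, hN⟩ := (CartierStructure.mem_testSet_iff hp).mp hN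
  refine (CartierStructure.mem_testSet_iff hp).mpr ⟨fun χ hχ μ hμ x => ?_, fun Q _ hQ => ?_⟩
  · refine CartierStructure.apply_apply_mem_of_mem_coext_plus_pow (T := N.toAddSubmonoid)
      ((pow_one (C.coext S).plus).symm ▸ hχ) (fun φ hφ y => hstable φ ?_ _ (hμ y)) x
    rwa [pow_one] at hφ
  · obtain ⟨j, hj, hη⟩ := hN (Q.under R) (isAssociatedPrime_under_of_coext hQ)
    refine ⟨j, hj, fun χ hχ μ hμ => ?_⟩
    obtain ⟨k, hk⟩ := mem_localTorsion.mp hμ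
    obtain ⟨e, -, he⟩ := CartierStructure.exists_isCartierMap_of_mem_plus_pow hχ
    refine he.apply_mem_localSaturation hp (fun ν hν => ?_) hk
    refine mem_localSaturation_coextSubmodule fun x =>
      CartierStructure.apply_apply_mem_of_mem_coext_plus_pow
        (T := (localSaturation (Q.under R).primeCompl N).toAddSubmonoid) hχ
        (fun φ hφ y => hη φ hφ _ ?_) x
    exact mem_localTorsion.mpr ⟨k, le_localSaturation (apply_mem_torsionBySet_pow_under hν y)⟩

end Coextension

/-! ### Traces of a member of the test set -/

section Trace

variable {R S M : Type*} [CommRing R] [CommRing S] [Algebra R S] [AddCommGroup M] [Module R M]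

theorem exists_dual_apply_ne_zero {A V : Type*} [CommRing A] [IsDomain A] [AddCommGroup V]
    [Module A V] [Module.Finite A V] {v : V} (hv : ∀ a : A, a • v = 0 → a = 0) :
    ∃ f : V →ₗ[A] A, f v ≠ 0 := by
  let U := nonZeroDivisors A
  let K := FractionRing A
  have hv' : LocalizedModule.mkLinearMap U V v ≠ 0 := fun h => by
    obtain ⟨s, hs, hsv⟩ := mk_eq_zero_iff_mem_localSaturation_bot.mp h
    exact nonZeroDivisors.ne_zero hs (hv s hsv)
  obtain ⟨l, hl⟩ := Module.Projective.exists_dual_eq_one K hv'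
  let g : V →ₗ[A] K := l.restrictScalars A ∘ₗ LocalizedModule.mkLinearMap U V
  have hg : LinearMap.range g ≤ localSaturation U (LinearMap.range (Algebra.linearMap A K)) := by
    rintro x -
    obtain ⟨⟨a, s⟩, h⟩ := IsLocalization.surj U x
    exact ⟨s, s.2, a, by rw [Algebra.smul_def, mul_comm, h, Algebra.linearMap_apply]⟩
  obtain ⟨s, hs, hsg⟩ :=
    exists_forall_smul_mem_of_le_localSaturation (Module.Finite.iff_fg.mp (.range g)) hg
  let i := LinearEquiv.ofInjective (Algebra.linearMap A K) (IsFractionRing.injective A K)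
  refine ⟨i.symm ∘ₗ (s • g).codRestrict _ fun x => hsg _ ⟨x, rfl⟩, fun h => ?_⟩
  have hsv : s • g v = 0 := congrArg Subtype.val (i.symm.map_eq_zero_iff.mp h)
  have hgv : g v = 1 := hl
  rw [hgv, Algebra.smul_def, mul_one, map_eq_zero_iff _ (IsFractionRing.injective A K)] at hsv
  exact nonZeroDivisors.ne_zero hs hsv

theorem exists_coext_apply_one_eq_smul [Module.Finite R S] {η : Ideal R} [η.IsPrime]
    (hη : RingHom.ker (algebraMap R S) ≤ η) {m : M}
    (hm : m ∈ Submodule.torsionBySet R M η) :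
    ∃ μ ∈ Submodule.torsionBySet S (S →ₗ[R] M) (η.map (algebraMap R S)), ∃ r ∉ η, μ 1 = r • m := by
  obtain ⟨Q, -, _, hQη⟩ := Ideal.exists_ideal_over_prime_of_isIntegral (S := S) η ⊥ hη
  have : Q.LiesOver η := ⟨hQη.symm⟩
  have : Module.Finite (R ⧸ η) (S ⧸ Q) := .of_restrictScalars_finite R _ _
  obtain ⟨f, hf⟩ := exists_dual_apply_ne_zero (A := R ⧸ η) (v := (1 : S ⧸ Q)) fun a ha => by
    rw [← Algebra.algebraMap_eq_smul_one] at ha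
    exact FaithfulSMul.algebraMap_injective (R ⧸ η) (S ⧸ Q) (ha.trans (map_zero _).symm)
  let g : (R ⧸ η) →ₗ[R] M := η.liftQ (LinearMap.toSpanSingleton R M m) fun a ha =>
    (Submodule.mem_torsionBySet_iff _ _).mp hm ⟨a, ha⟩
  let μ : S →ₗ[R] M := g ∘ₗ f.restrictScalars R ∘ₗ (Ideal.Quotient.mkₐ R Q).toLinearMap
  have hμ (x : S) : ∃ r : R, Ideal.Quotient.mk η r = f (Ideal.Quotient.mk Q x) ∧ μ x = r • m := by
    obtain ⟨r, hr⟩ := Ideal.Quotient.mk_surjective (f (Ideal.Quotient.mk Q x))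
    exact ⟨r, hr, congrArg g hr.symm⟩
  refine ⟨μ, ?_, ?_⟩
  · rw [Ideal.map, ← Submodule.torsionBySet_eq_torsionBySet_span, Submodule.mem_torsionBySet_iff]
    rintro ⟨_, a, ha, rfl⟩
    ext x
    obtain ⟨r, -, hr⟩ := hμ x
    rw [algebraMap_smul, LinearMap.smul_apply, hr, smul_comm,
      (Submodule.mem_torsionBySet_iff _ _).mp hm ⟨a, ha⟩, smul_zero, LinearMap.zero_apply]
  · obtain ⟨r, hrf, hr⟩ := hμ 1
    refine ⟨r, fun h => hf ?_, hr⟩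
    rw [← map_one (Ideal.Quotient.mk Q), ← hrf, Ideal.Quotient.eq_zero_iff_mem.mpr h]

theorem torsionBySet_le_localSaturation_traceImage [Module.Finite R S] {η : Ideal R} [η.IsPrime]
    (hη : RingHom.ker (algebraMap R S) ≤ η) :
    Submodule.torsionBySet R M η ≤ localSaturation η.primeCompl
      (traceImage (Submodule.torsionBySet S (S →ₗ[R] M) (η.map (algebraMap R S)))) := by
  intro m hm
  obtain ⟨μ, hμ, r, hr, hrm⟩ := exists_coext_apply_one_eq_smul hη hm
  exact ⟨r, hr, μ, hμ, hrm⟩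

open scoped Pointwise

variable {p : ℕ} [IsNoetherianRing R] [Module.Finite R S]

theorem mapsTorsionInto_traceImage (hp : p.Prime) (hpS : (p : S) = 0) {C : CartierStructure p R M}
    {η : Ideal R} [η.IsPrime] (hη : RingHom.ker (algebraMap R S) ≤ η)
    {N : Submodule S (S →ₗ[R] M)} {i j : ℕ}
    (hN : ∀ (Q : Ideal S) [Q.IsPrime], IsAssociatedPrime Q (S →ₗ[R] M) →
      (C.coext S).MapsTorsionInto Q N j)
    (hi : localTorsion M η = localSaturation η.primeCompl (Submodule.torsionBySet R M ↑(η ^ i))) :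
    C.MapsTorsionInto η (traceImage N) (j + i) := by
  have : IsNoetherianRing S := .of_finite R S
  intro ψ hψ m hm
  rw [pow_add] at hψ
  obtain ⟨φ, hφ, ψ, hψ, rfl⟩ := hψ
  obtain ⟨d, -, hφd⟩ := CartierStructure.exists_isCartierMap_of_mem_plus_pow hφ
  obtain ⟨e, hie, hψe⟩ := CartierStructure.exists_isCartierMap_of_mem_plus_pow hψ
  have hkill : ψ m ∈ localSaturation η.primeCompl (Submodule.torsionBySet R M η) := by
    refine hψe.apply_mem_localSaturation hp.pos (fun x hx => le_localSaturation ?_) (hi ▸ hm)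
    have hx' := hψe.apply_mem_torsionBySet_pow (d := 1)
      (by rw [one_mul]; exact hie.trans (Nat.lt_pow_self hp.one_lt).le) hx
    rwa [pow_one] at hx'
  refine hφd.apply_mem_localSaturation hp.pos (fun x hx => ?_) hkill
  refine hφd.apply_mem_localSaturation hp.pos ?_ (torsionBySet_le_localSaturation_traceImage hη hx)
  rintro _ ⟨μ, hμ, rfl⟩
  obtain ⟨χ, hχ, hχφ⟩ := CartierStructure.exists_mem_coext_plus_pow hp hpS hφ
  exact hχφ μ ▸ apply_one_mem_localSaturation_traceImage
    (CartierStructure.apply_mem_localSaturation_of_mem_torsionBySet_map hp.pos hN η hχ hμ)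

theorem traceImage_mem_testSet [Module.Finite R M] (hp : p.Prime) (hpS : (p : S) = 0)
    (hker : RingHom.ker (algebraMap R S) ≤ (Module.annihilator R M).radical)
    {C : CartierStructure p R M} {N : Submodule S (S →ₗ[R] M)}
    (hN : N ∈ testSet p S (S →ₗ[R] M) (C.coext S).carrier) :
    traceImage N ∈ testSet p R M C.carrier := by
  have : IsNoetherianRing S := .of_finite R S
  refine (CartierStructure.mem_testSet_iff hp.pos).mpr ⟨?_, fun η _ hη => ?_⟩
  · rintro φ hφ _ ⟨μ, hμ, rfl⟩
    obtain ⟨χ, hχ, hχφ⟩ :=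
      CartierStructure.exists_mem_coext_plus_pow hp hpS ((pow_one C.plus).symm ▸ hφ)
    rw [pow_one] at hχ
    exact ⟨χ μ, ((CartierStructure.mem_testSet_iff hp.pos).mp hN).1 χ hχ μ hμ, hχφ μ⟩
  · obtain ⟨j, hj, hN⟩ := CartierStructure.exists_forall_mapsTorsionInto hp.pos hN
    obtain ⟨i, hi⟩ := exists_localTorsion_eq (X := M) η
    have hkerη : RingHom.ker (algebraMap R S) ≤ η :=
      hker.trans ((Ideal.IsPrime.radical_le_iff hη.1).mpr
        (Submodule.annihilator_top.symm.trans_le hη.annihilator_le))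
    exact ⟨j + i, hj.trans (Nat.le_add_right j i), mapsTorsionInto_traceImage hp hpS hkerη hN hi⟩

end Trace

theorem trace_image_testModule_general
    (p : ℕ) (hp : p.Prime) (R : Type*) [CommRing R] [IsNoetherianRing R] [CharP R p]
    (S : Type*) [CommRing S] [Algebra R S] [Module.Finite R S]
    (M : Type*) [AddCommGroup M] [Module R M] [Module.Finite R M]
    (hker : RingHom.ker (algebraMap R S) ≤ (Module.annihilator R M).radical)
    (C : CartierStructure p R M)
    (τM : Submodule R M) (hτM : IsLeast (testSet p R M C.carrier) τM)
    (τS : Submodule S (S →ₗ[R] M))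
    (hτS : IsLeast (testSet p S (S →ₗ[R] M) (pushShriek p R S M C.carrier)) τS) :
    ((fun μ : S →ₗ[R] M => μ (1 : S)) '' (τS : Set (S →ₗ[R] M)) = (τM : Set M)) ∧
      (τM = ⊤ → Function.Surjective fun μ : S →ₗ[R] M => μ (1 : S)) := by
  have hpS : (p : S) = 0 := by
    rw [← map_natCast (algebraMap R S), CharP.cast_eq_zero, map_zero]
  have hle : traceImage τS ≤ τM := by
    rintro _ ⟨μ, hμ, rfl⟩
    exact hτS.2 (coextSubmodule_mem_testSet hp.pos hτM.1) hμ 1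
  have hge : τM ≤ traceImage τS := hτM.2 (traceImage_mem_testSet hp hpS hker hτS.1)
  refine ⟨congrArg SetLike.coe (le_antisymm hle hge), fun htop m => ?_⟩
  obtain ⟨μ, -, hμ⟩ := hge (htop ▸ Submodule.mem_top : m ∈ τM)
  exact ⟨μ, hμ⟩

/-- **Test modules under finite covers:** `Tr_M(τ(f^!M, f^*C)) = τ(M, C)`; in particular,
if `M` is `F`-regular (`τ(M,C) = M`) then the trace `Tr_M` is surjective. -/
theorem trace_image_testModule
    (p : ℕ) (hp : p.Prime) (R : Type*) [CommRing R] [IsNoetherianRing R] [CharP R p]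
    (hFf : letI := frobModule p hp R; Module.Finite R (FrobMod R))
    (S : Type*) [CommRing S] [Algebra R S] [Module.Finite R S]
    (hinj : Function.Injective (algebraMap R S))
    (M : Type*) [AddCommGroup M] [Module R M] [Module.Finite R M]
    (C : CartierStructure p R M)
    (τM : Submodule R M) (hτM : IsLeast (testSet p R M C.carrier) τM)
    (τS : Submodule S (S →ₗ[R] M))
    (hτS : IsLeast (testSet p S (S →ₗ[R] M) (pushShriek p R S M C.carrier)) τS) :
    ((fun μ : S →ₗ[R] M => μ (1 : S)) '' (τS : Set (S →ₗ[R] M)) = (τM : Set M)) ∧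
      (τM = ⊤ → Function.Surjective fun μ : S →ₗ[R] M => μ (1 : S)) :=
  trace_image_testModule_general p hp R S M
    (((RingHom.injective_iff_ker_eq_bot _).mp hinj).trans_le bot_le) C τM hτM τS hτS
end
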